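/- arXiv:1901.09752 — 3 statements merged into one kernel-verified Lean document; each statement's English description precedes it below -/
import Mathlib

section
/- Let γ, ε ∈ ℝ with either (γ ≥ 1 and ε > 0) or (γ < −1 and ε < 0). Then there exists a C² function u : ℝ² → ℝ that satisfies L_{γ,ε}[u] = 0 at every point of ℝ² and is not affine linear; that is, the equation L_{γ,ε}[u] = 0 does not have the Bernstein property in these parameter ranges. -/
/-- First partial derivative in the `x`-direction. -/
noncomputable def ux (u : ℝ × ℝ → ℝ) (p : ℝ × ℝ) : ℝ := fderiv ℝ u p (1, 0)

/-- First partial derivative in the `y`-direction. -/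
noncomputable def uy (u : ℝ × ℝ → ℝ) (p : ℝ × ℝ) : ℝ := fderiv ℝ u p (0, 1)

/-- Second partial derivative `u_xx`. -/
noncomputable def uxx (u : ℝ × ℝ → ℝ) (p : ℝ × ℝ) : ℝ := fderiv ℝ (ux u) p (1, 0)

/-- Second partial derivative `u_xy`. -/
noncomputable def uxy (u : ℝ × ℝ → ℝ) (p : ℝ × ℝ) : ℝ := fderiv ℝ (ux u) p (0, 1)

/-- Second partial derivative `u_yy`. -/
noncomputable def uyy (u : ℝ × ℝ → ℝ) (p : ℝ × ℝ) : ℝ := fderiv ℝ (uy u) p (0, 1)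

/-- The operator `L_{γ,ε}`. -/
noncomputable def Lop (γ ε : ℝ) (u : ℝ × ℝ → ℝ) (p : ℝ × ℝ) : ℝ :=
  (2 * ε + (γ + 1) * ux u p ^ 2 + (γ - 1) * uy u p ^ 2) * uxx u p
    + 4 * ux u p * uy u p * uxy u p
    + (2 * ε + (γ - 1) * ux u p ^ 2 + (γ + 1) * uy u p ^ 2) * uyy u p

/-!
Under the Legendre transform, in which `∇u` and `∇φ` are inverse to each other, `L_{γ,ε}[u] = 0`
becomes the *linear* equation
`(2ε + (γ+1)p² + (γ-1)q²) φ_qq - 4pq φ_pq + (2ε + (γ-1)p² + (γ+1)q²) φ_pp = 0`.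
The ansatz `φ = (p² - q²) H(p² + q²)` reduces it to a second-order ODE for `H`. For `γ = 1` it has
the solution `H(s) = 1 + s / (6ε)`; otherwise it is hypergeometric, and Pfaff's transformation
gives a solution which is analytic and positive on all of `[0, ∞)`.

In the stated range of parameters the equation is uniformly elliptic, with eigenvalue ratio at least
`1 - 2μ` for some `0 < μ < 1/2`. A first-zero argument on the ODE then yields
`-μ H < s H' < H`. This makes the Hessian determinant of `φ` nonvanishing, and it makes
`s^μ H(s)` increasing, so that `‖∇φ‖² ≥ s H(s)²` tends to infinity and `∇φ` is proper. By Hadamard's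
global inverse function theorem `∇φ` is a diffeomorphism of the plane. Its inverse is the gradient
of an entire solution `u`, and `u` is not affine because `∇u` is surjective.
-/

open Filter Set Topology

section ProperLocalHomeomorph

theorem isHomeomorph_of_isLocalHomeomorph_of_isProperMap {X Y : Type*} [TopologicalSpace X]
    [TopologicalSpace Y] [ConnectedSpace X] [T2Space X] [SimplyConnectedSpace Y]
    [LocallyPathConnectedSpace Y] {f : X → Y} (hl : IsLocalHomeomorph f) (hp : IsProperMap f) :
    IsHomeomorph f := by
  have finite_fiber (y : Y) : (f ⁻¹' {y}).Finite :=
    (hp.isCompact_preimage isCompact_singleton).finite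
      (.of_openPartialHomeomorph f subset_rfl fun x _ ↦ hl x |>.imp fun _ h ↦ ⟨h.1, h.2.symm⟩)
  have cov : IsCoveringMap f := isCoveringMap_iff_isCoveringMapOn_univ.mpr <|
    hp.isClosedMap.isCoveringMapOn_of_isLocalHomeomorphOn (fun y _ ↦ finite_fiber y)
      (isLocalHomeomorph_iff_isLocalHomeomorphOn_univ.mp hl)
  obtain ⟨x₀⟩ : Nonempty X := inferInstance
  obtain ⟨g, ⟨hg₀, hfg⟩, -⟩ :=
    cov.existsUnique_continuousMap_lifts (ContinuousMap.id Y) (f x₀) x₀ rfl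
  have hgf : g ∘ f = id :=
    cov.eq_of_comp_eq (g.continuous.comp hp.continuous) continuous_id
      (by rw [← Function.comp_assoc, hfg]; rfl) x₀ hg₀
  exact ⟨hp.continuous, hl.isOpenMap,
    Function.LeftInverse.injective (congrFun hgf), Function.RightInverse.surjective (congrFun hfg)⟩

/-- Hadamard's global inverse function theorem. -/
theorem exists_homeomorph_contDiff_symm {E F : Type*} [NormedAddCommGroup E] [NormedSpace ℝ E]
    [CompleteSpace E] [NormedAddCommGroup F] [NormedSpace ℝ F] {n : WithTop ℕ∞} (hn : n ≠ 0)
    {f : E → F} {f' : E → E ≃L[ℝ] F} (hf : ContDiff ℝ n f)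
    (hf' : ∀ x, HasFDerivAt f (f' x : E →L[ℝ] F) x) (hp : IsProperMap f) :
    ∃ e : E ≃ₜ F, ⇑e = f ∧ ContDiff ℝ n e.symm := by
  have hl : IsLocalHomeomorph f := IsLocalHomeomorph.mk f fun x ↦
    have hx := hf.contDiffAt.hasStrictFDerivAt' (hf' x) hn
    ⟨hx.toOpenPartialHomeomorph f, hx.mem_toOpenPartialHomeomorph_source, fun _ _ ↦ rfl⟩
  exact ⟨(isHomeomorph_of_isLocalHomeomorph_of_isProperMap hl hp).homeomorph, rfl,
    Homeomorph.contDiff_symm _ hf' hf⟩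

end ProperLocalHomeomorph

section Legendre

theorem hasFDerivAt_legendreTransform {𝕜 E F : Type*} [NontriviallyNormedField 𝕜]
    [NormedAddCommGroup E] [NormedSpace 𝕜 E] [NormedAddCommGroup F] [NormedSpace 𝕜 F]
    (B : F →L[𝕜] E →L[𝕜] 𝕜) {φ : E → 𝕜} {Γ : F → E} {ξ : F} (hΓ : DifferentiableAt 𝕜 Γ ξ)
    (hφ : HasFDerivAt φ (B ξ) (Γ ξ)) :
    HasFDerivAt (fun η ↦ B η (Γ η) - φ (Γ η)) (B.flip (Γ ξ)) ξ := by
  refine ((B.hasFDerivAt.clm_apply hΓ.hasFDerivAt).sub (hφ.comp ξ hΓ.hasFDerivAt)).congr_fderiv ?_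
  ext v
  simp

end Legendre

section Plane

/-- The Euclidean inner product on `ℝ × ℝ`, whose norm is the sup norm, so that it carries no
`InnerProductSpace` structure; `planeDot g` is the differential with gradient `g`. -/
noncomputable def planeDot : ℝ × ℝ →L[ℝ] ℝ × ℝ →L[ℝ] ℝ :=
  (ContinuousLinearMap.fst ℝ ℝ ℝ).smulRight (ContinuousLinearMap.fst ℝ ℝ ℝ) +
    (ContinuousLinearMap.snd ℝ ℝ ℝ).smulRight (ContinuousLinearMap.snd ℝ ℝ ℝ)

theorem planeDot_apply (v w : ℝ × ℝ) : planeDot v w = v.1 * w.1 + v.2 * w.2 := rfl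

theorem planeDot_flip : planeDot.flip = planeDot := by
  ext <;> simp [planeDot_apply]

/-- The endomorphism of `ℝ × ℝ` with symmetric matrix `!![a, b; b, c]`; a Hessian is the derivative
of a gradient in this form. -/
noncomputable def symmCLM (a b c : ℝ) : ℝ × ℝ →L[ℝ] ℝ × ℝ :=
  (planeDot (a, b)).prod (planeDot (b, c))

theorem symmCLM_apply (a b c : ℝ) (v : ℝ × ℝ) :
    symmCLM a b c v = (a * v.1 + b * v.2, b * v.1 + c * v.2) := rfl

/-- `symmCLM a b c` as an equivalence with inverse given by Cramer's rule. -/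
noncomputable def symmCLE {a b c : ℝ} (h : a * c - b ^ 2 ≠ 0) : (ℝ × ℝ) ≃L[ℝ] ℝ × ℝ :=
  ContinuousLinearEquiv.equivOfInverse (symmCLM a b c)
    (symmCLM (c / (a * c - b ^ 2)) (-b / (a * c - b ^ 2)) (a / (a * c - b ^ 2)))
    (fun v ↦ by
      ext <;> simp only [symmCLM_apply]
      · linear_combination v.1 * mul_inv_cancel₀ h
      · linear_combination v.2 * mul_inv_cancel₀ h)
    (fun v ↦ by
      ext <;> simp only [symmCLM_apply]
      · linear_combination v.1 * mul_inv_cancel₀ h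
      · linear_combination v.2 * mul_inv_cancel₀ h)

theorem coe_symmCLE_symm {a b c : ℝ} (h : a * c - b ^ 2 ≠ 0) :
    ((symmCLE h).symm : ℝ × ℝ →L[ℝ] ℝ × ℝ) =
      symmCLM (c / (a * c - b ^ 2)) (-b / (a * c - b ^ 2)) (a / (a * c - b ^ 2)) := rfl

theorem Lop_eq_of_hasFDerivAt {γ ε a b c : ℝ} {u : ℝ × ℝ → ℝ} {Γ : ℝ × ℝ → ℝ × ℝ} {p : ℝ × ℝ}
    (hu : ∀ p, HasFDerivAt u (planeDot (Γ p)) p) (hΓ : HasFDerivAt Γ (symmCLM a b c) p) :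
    Lop γ ε u p =
      (2 * ε + (γ + 1) * (Γ p).1 ^ 2 + (γ - 1) * (Γ p).2 ^ 2) * a + 4 * (Γ p).1 * (Γ p).2 * b +
        (2 * ε + (γ - 1) * (Γ p).1 ^ 2 + (γ + 1) * (Γ p).2 ^ 2) * c := by
  have hux : ux u = fun p ↦ (Γ p).1 := by
    funext p
    simp [ux, (hu p).fderiv, planeDot_apply]
  have huy : uy u = fun p ↦ (Γ p).2 := by
    funext p
    simp [uy, (hu p).fderiv, planeDot_apply]
  simp [Lop, uxx, uxy, uyy, hux, huy, hΓ.fst.fderiv, hΓ.snd.fderiv, symmCLM_apply]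

theorem not_affine_of_surjective_gradient {u : ℝ × ℝ → ℝ} {Γ : ℝ × ℝ → ℝ × ℝ}
    (hu : ∀ p, HasFDerivAt u (planeDot (Γ p)) p) (hΓ : Function.Surjective Γ) :
    ¬ ∃ a b c : ℝ, ∀ x y : ℝ, u (x, y) = a * x + b * y + c := by
  rintro ⟨a, b, c, habc⟩
  have hu_eq : u = fun p ↦ planeDot (a, b) p + c := funext fun p ↦ habc p.1 p.2
  have grad_const (p : ℝ × ℝ) : Γ p = (a, b) := by
    have h := (hu p).unique (hu_eq ▸ (planeDot (a, b)).hasFDerivAt.add_const c)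
    ext
    · simpa [planeDot_apply] using congr($h (1, 0))
    · simpa [planeDot_apply] using congr($h (0, 1))
  obtain ⟨p, hp⟩ := hΓ (a + 1, b)
  simp [grad_const p] at hp

theorem contDiff_two_of_hasFDerivAt_planeDot {u : ℝ × ℝ → ℝ} {Γ : ℝ × ℝ → ℝ × ℝ}
    (hu : ∀ p, HasFDerivAt u (planeDot (Γ p)) p) (hΓ : ContDiff ℝ 1 Γ) : ContDiff ℝ 2 u :=
  (contDiff_succ_iff_hasFDerivAt (n := 1)).mpr
    ⟨fun p ↦ planeDot (Γ p), planeDot.contDiff.comp hΓ, hu⟩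

theorem exists_solution_of_legendre_dual {γ ε : ℝ} {φ : ℝ × ℝ → ℝ} {G : ℝ × ℝ → ℝ × ℝ}
    {a b c : ℝ × ℝ → ℝ} (hφ : ∀ z, HasFDerivAt φ (planeDot (G z)) z)
    (hG : ContDiff ℝ 1 G) (hG' : ∀ z, HasFDerivAt G (symmCLM (a z) (b z) (c z)) z)
    (hdet : ∀ z, a z * c z - b z ^ 2 ≠ 0) (hproper : IsProperMap G)
    (hdual : ∀ z : ℝ × ℝ,
      (2 * ε + (γ + 1) * z.1 ^ 2 + (γ - 1) * z.2 ^ 2) * c z - 4 * z.1 * z.2 * b z +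
        (2 * ε + (γ - 1) * z.1 ^ 2 + (γ + 1) * z.2 ^ 2) * a z = 0) :
    ∃ u : ℝ × ℝ → ℝ, ContDiff ℝ 2 u ∧ (∀ p : ℝ × ℝ, Lop γ ε u p = 0) ∧
      ¬ ∃ a b c : ℝ, ∀ x y : ℝ, u (x, y) = a * x + b * y + c := by
  obtain ⟨e, rfl, he⟩ := exists_homeomorph_contDiff_symm one_ne_zero hG
    (f' := fun z ↦ symmCLE (hdet z)) hG' hproper
  set Γ := e.symm
  have hu (p : ℝ × ℝ) :
      HasFDerivAt (fun q ↦ planeDot q (Γ q) - φ (Γ q)) (planeDot (Γ p)) p := by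
    have hφp := hφ (Γ p)
    rw [e.apply_symm_apply] at hφp
    simpa only [planeDot_flip] using
      hasFDerivAt_legendreTransform planeDot (he.differentiable one_ne_zero p) hφp
  refine ⟨_, contDiff_two_of_hasFDerivAt_planeDot hu he, fun p ↦ ?_,
    not_affine_of_surjective_gradient hu Γ.surjective⟩
  have hΓ : HasFDerivAt Γ ((symmCLE (hdet (Γ p))).symm : ℝ × ℝ →L[ℝ] ℝ × ℝ) p :=
    .of_local_left_inverse Γ.continuous.continuousAt (hG' (Γ p))
      (.of_forall e.apply_symm_apply)
  rw [coe_symmCLE_symm] at hΓ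
  rw [Lop_eq_of_hasFDerivAt hu hΓ]
  linear_combination (a (Γ p) * c (Γ p) - b (Γ p) ^ 2)⁻¹ * hdual (Γ p)

end Plane

section SaddlePotential

theorem hasFDerivAt_comp_normSq {f : ℝ → ℝ} {f' : ℝ} {z : ℝ × ℝ}
    (hf : HasDerivAt f f' (z.1 ^ 2 + z.2 ^ 2)) :
    HasFDerivAt (fun w : ℝ × ℝ ↦ f (w.1 ^ 2 + w.2 ^ 2)) (planeDot ((2 * f') • z)) z := by
  refine (hf.comp_hasFDerivAt z
    ((hasFDerivAt_fst.pow 2).add (hasFDerivAt_snd.pow 2))).congr_fderiv ?_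
  ext <;> simp [planeDot_apply] <;> ring

theorem hasFDerivAt_sq_sub_sq (z : ℝ × ℝ) :
    HasFDerivAt (fun w : ℝ × ℝ ↦ w.1 ^ 2 - w.2 ^ 2) (planeDot (2 * z.1, -2 * z.2)) z := by
  refine ((hasFDerivAt_fst.pow 2).sub (hasFDerivAt_snd.pow 2)).congr_fderiv ?_
  ext <;> simp [planeDot_apply]

/-- The quadratic saddle `p² - q²` modulated by a radial profile `H`. -/
def saddlePotential (H : ℝ → ℝ) (z : ℝ × ℝ) : ℝ :=
  (z.1 ^ 2 - z.2 ^ 2) * H (z.1 ^ 2 + z.2 ^ 2)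

/-- The gradient of `saddlePotential H`. -/
noncomputable def saddleGradient (H : ℝ → ℝ) (z : ℝ × ℝ) : ℝ × ℝ :=
  (2 * z.1 * (H (z.1 ^ 2 + z.2 ^ 2) + (z.1 ^ 2 - z.2 ^ 2) * deriv H (z.1 ^ 2 + z.2 ^ 2)),
    2 * z.2 * (-H (z.1 ^ 2 + z.2 ^ 2) + (z.1 ^ 2 - z.2 ^ 2) * deriv H (z.1 ^ 2 + z.2 ^ 2)))

/-- The second derivative of `saddlePotential H` in the first variable. -/
noncomputable def saddleHess₁₁ (H : ℝ → ℝ) (z : ℝ × ℝ) : ℝ :=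
  2 * H (z.1 ^ 2 + z.2 ^ 2) + (10 * z.1 ^ 2 - 2 * z.2 ^ 2) * deriv H (z.1 ^ 2 + z.2 ^ 2) +
    4 * z.1 ^ 2 * (z.1 ^ 2 - z.2 ^ 2) * deriv (deriv H) (z.1 ^ 2 + z.2 ^ 2)

/-- The mixed second derivative of `saddlePotential H`. -/
noncomputable def saddleHess₁₂ (H : ℝ → ℝ) (z : ℝ × ℝ) : ℝ :=
  4 * z.1 * z.2 * (z.1 ^ 2 - z.2 ^ 2) * deriv (deriv H) (z.1 ^ 2 + z.2 ^ 2)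

/-- The second derivative of `saddlePotential H` in the second variable. -/
noncomputable def saddleHess₂₂ (H : ℝ → ℝ) (z : ℝ × ℝ) : ℝ :=
  -2 * H (z.1 ^ 2 + z.2 ^ 2) + (2 * z.1 ^ 2 - 10 * z.2 ^ 2) * deriv H (z.1 ^ 2 + z.2 ^ 2) +
    4 * z.2 ^ 2 * (z.1 ^ 2 - z.2 ^ 2) * deriv (deriv H) (z.1 ^ 2 + z.2 ^ 2)

variable {H : ℝ → ℝ} {z : ℝ × ℝ}

theorem hasFDerivAt_saddlePotential (hH : DifferentiableAt ℝ H (z.1 ^ 2 + z.2 ^ 2)) :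
    HasFDerivAt (saddlePotential H) (planeDot (saddleGradient H z)) z := by
  refine ((hasFDerivAt_sq_sub_sq z).mul
    (hasFDerivAt_comp_normSq hH.hasDerivAt)).congr_fderiv ?_
  ext <;> simp [planeDot_apply, saddleGradient] <;> ring

theorem hasFDerivAt_saddleGradient (hH : DifferentiableAt ℝ H (z.1 ^ 2 + z.2 ^ 2))
    (hH' : DifferentiableAt ℝ (deriv H) (z.1 ^ 2 + z.2 ^ 2)) :
    HasFDerivAt (saddleGradient H)
      (symmCLM (saddleHess₁₁ H z) (saddleHess₁₂ H z) (saddleHess₂₂ H z)) z := by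
  have hd := (hasFDerivAt_sq_sub_sq z).mul (hasFDerivAt_comp_normSq hH'.hasDerivAt)
  have h := hasFDerivAt_comp_normSq hH.hasDerivAt
  refine (((hasFDerivAt_fst.const_mul 2).mul (h.add hd)).prodMk
    ((hasFDerivAt_snd.const_mul 2).mul (h.neg.add hd))).congr_fderiv ?_
  ext <;> simp [planeDot_apply, symmCLM_apply, saddleHess₁₁, saddleHess₁₂, saddleHess₂₂] <;> ring

theorem contDiff_saddleGradient (hH : ∀ s, 0 ≤ s → AnalyticAt ℝ H s) :
    ContDiff ℝ 1 (saddleGradient H) := by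
  refine contDiff_iff_contDiffAt.mpr fun z ↦ ?_
  have hs : AnalyticAt ℝ H (z.1 ^ 2 + z.2 ^ 2) := hH _ (by positivity)
  have hsq : ContDiffAt ℝ 1 (fun w : ℝ × ℝ ↦ w.1 ^ 2 + w.2 ^ 2) z := by fun_prop
  have h₀ : ContDiffAt ℝ 1 (fun w : ℝ × ℝ ↦ H (w.1 ^ 2 + w.2 ^ 2)) z :=
    hs.contDiffAt.comp z hsq
  have h₁ : ContDiffAt ℝ 1 (fun w : ℝ × ℝ ↦ deriv H (w.1 ^ 2 + w.2 ^ 2)) z :=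
    hs.deriv.contDiffAt.comp (g := deriv H) z hsq
  have hd : ContDiffAt ℝ 1 (fun w : ℝ × ℝ ↦ w.1 ^ 2 - w.2 ^ 2) z := by fun_prop
  exact ((contDiffAt_const.mul contDiffAt_fst).mul (h₀.add (hd.mul h₁))).prodMk
    ((contDiffAt_const.mul contDiffAt_snd).mul (h₀.neg.add (hd.mul h₁)))

theorem sq_mul_saddleHess_det (H : ℝ → ℝ) (z : ℝ × ℝ) :
    let s := z.1 ^ 2 + z.2 ^ 2
    s ^ 2 * (saddleHess₁₁ H z * saddleHess₂₂ H z - saddleHess₁₂ H z ^ 2) =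
      -(2 * (H s - s * deriv H s) *
            (2 * H s + 10 * s * deriv H s + 4 * s ^ 2 * deriv (deriv H) s) *
            (z.1 ^ 2 - z.2 ^ 2) ^ 2 +
          16 * (H s + 2 * s * deriv H s) ^ 2 * (z.1 * z.2) ^ 2) := by
  simp only [saddleHess₁₁, saddleHess₁₂, saddleHess₂₂]
  ring

theorem mul_saddleGradient_normSq (H : ℝ → ℝ) (z : ℝ × ℝ) :
    let s := z.1 ^ 2 + z.2 ^ 2
    s * ((saddleGradient H z).1 ^ 2 + (saddleGradient H z).2 ^ 2) =
      4 * (H s + s * deriv H s) ^ 2 * (z.1 ^ 2 - z.2 ^ 2) ^ 2 +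
        4 * H s ^ 2 * (2 * z.1 * z.2) ^ 2 := by
  unfold saddleGradient
  ring

end SaddlePotential

section NormSq

theorem sq_norm_le_normSq (z : ℝ × ℝ) : ‖z‖ ^ 2 ≤ z.1 ^ 2 + z.2 ^ 2 := by
  obtain h | h := max_choice ‖z.1‖ ‖z.2‖ <;> rw [Prod.norm_def, h, Real.norm_eq_abs, sq_abs]
  · exact le_add_of_nonneg_right (sq_nonneg _)
  · exact le_add_of_nonneg_left (sq_nonneg _)

theorem normSq_le_two_mul_sq_norm (z : ℝ × ℝ) : z.1 ^ 2 + z.2 ^ 2 ≤ 2 * ‖z‖ ^ 2 := by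
  rw [two_mul, ← sq_abs z.1, ← sq_abs z.2]
  gcongr
  · exact norm_fst_le z
  · exact norm_snd_le z

theorem tendsto_normSq_cocompact :
    Tendsto (fun z : ℝ × ℝ ↦ z.1 ^ 2 + z.2 ^ 2) (cocompact _) atTop :=
  tendsto_atTop_mono sq_norm_le_normSq
    ((tendsto_pow_atTop two_ne_zero).comp (tendsto_norm_cocompact_atTop (E := ℝ × ℝ)))

theorem tendsto_cocompact_of_tendsto_normSq {α : Type*} {l : Filter α} {f : α → ℝ × ℝ}
    (hf : Tendsto (fun x ↦ (f x).1 ^ 2 + (f x).2 ^ 2) l atTop) : Tendsto f l (cocompact _) := by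
  rw [← Metric.cobounded_eq_cocompact, ← tendsto_norm_atTop_iff_cobounded]
  have h : Tendsto (fun x ↦ 2 * ‖f x‖ ^ 2) l atTop :=
    tendsto_atTop_mono (fun x ↦ normSq_le_two_mul_sq_norm (f x)) hf
  refine tendsto_atTop.mpr fun b ↦ ?_
  filter_upwards [h.eventually_ge_atTop (2 * b ^ 2)] with x hx
  exact le_of_sq_le_sq (by linarith) (norm_nonneg _)

end NormSq

theorem pos_of_deriv_pos_of_eq_zero {f f' : ℝ → ℝ} {a x : ℝ}
    (hf : ∀ x, a ≤ x → HasDerivAt f (f' x) x) (ha : 0 < f a)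
    (hzero : ∀ x, a < x → f x = 0 → 0 < f' x) (hx : a ≤ x) : 0 < f x := by
  have cont {b : ℝ} : ContinuousOn f (Icc a b) := fun y hy ↦
    (hf y hy.1).continuousAt.continuousWithinAt
  have nonneg {y : ℝ} (hy : a ≤ y) : 0 ≤ f y := by
    refine image_le_of_deriv_right_lt_deriv_boundary' continuousOn_const
      (fun t _ ↦ hasDerivWithinAt_const t _ (0 : ℝ)) ha.le cont
      (fun t ht ↦ (hf t ht.1).hasDerivWithinAt) (fun t ht h0 ↦ ?_) ⟨hy, le_rfl⟩
    refine hzero t (ht.1.lt_of_ne ?_) h0.symm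
    rintro rfl
    exact ha.ne h0
  refine (nonneg hx).lt_of_ne fun h0 ↦ ?_
  have hax : a < x := hx.lt_of_ne (by rintro rfl; exact ha.ne h0)
  have hmin : IsLocalMin f x := by
    filter_upwards [lt_mem_nhds hax] with y hy
    exact h0 ▸ nonneg hy.le
  exact (hzero x hax h0.symm).ne' (hmin.hasDerivAt_eq_zero (hf x hx))

section Profile

/-- The symbol of `L_{γ,ε}` at a gradient `p` with `‖p‖² = s` is `(2ε + (γ-1)s) 1 + 2 p pᵀ`, whose
eigenvalues have ratio `1 + 2s / (2ε + (γ-1)s)`. This predicate says that the ratio stays above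
`1 - 2μ > 0` for all `s ≥ 0`. -/
structure IsUniformlyElliptic (γ ε μ : ℝ) : Prop where
  pos : 0 < μ
  lt_half : μ < 1 / 2
  ne_zero : ∀ s, 0 ≤ s → 2 * ε + (γ - 1) * s ≠ 0
  neg_lt_div : ∀ s, 0 ≤ s → -μ < s / (2 * ε + (γ - 1) * s)

theorem exists_isUniformlyElliptic {γ ε : ℝ} (h : (1 ≤ γ ∧ 0 < ε) ∨ (γ < -1 ∧ ε < 0)) :
    ∃ μ, IsUniformlyElliptic γ ε μ := by
  obtain ⟨hγ, hε⟩ | ⟨hγ, hε⟩ := h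
  · have hD (s : ℝ) (hs : 0 ≤ s) : 0 < 2 * ε + (γ - 1) * s := by
      have := mul_nonneg (sub_nonneg.mpr hγ) hs
      positivity
    exact ⟨1 / 4, by norm_num, by norm_num, fun s hs ↦ (hD s hs).ne', fun s hs ↦
      (by norm_num : -(1 / 4 : ℝ) < 0).trans_le (div_nonneg hs (hD s hs).le)⟩
  · have hD (s : ℝ) (hs : 0 ≤ s) : 2 * ε + (γ - 1) * s < 0 := by nlinarith
    have hγ' : 0 < 1 - γ := by linarith
    refine ⟨1 / (1 - γ), by positivity, by gcongr; linarith, fun s hs ↦ (hD s hs).ne,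
      fun s hs ↦ ?_⟩
    rw [lt_div_iff_of_neg (hD s hs), neg_mul, div_mul_eq_mul_div, lt_neg, div_lt_iff₀ hγ']
    linarith

/-- A positive solution `H`, analytic on `[0, ∞)`, of the ODE which says that `saddlePotential H`
solves the linear equation dual to `L_{γ,ε}[u] = 0` under the Legendre transform. -/
structure IsProfile (γ ε : ℝ) (H : ℝ → ℝ) : Prop where
  analyticAt : ∀ s, 0 ≤ s → AnalyticAt ℝ H s
  pos : ∀ s, 0 ≤ s → 0 < H s
  ode : ∀ s, 0 ≤ s →
    s * (2 * ε + (γ - 1) * s) * deriv (deriv H) s + (6 * ε + (3 * γ - 2) * s) * deriv H s - H s = 0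

namespace IsProfile

variable {γ ε μ s : ℝ} {H : ℝ → ℝ}

theorem hasDerivAt_mul_add_mul_deriv (hH : IsProfile γ ε H) (μ : ℝ) (hs : 0 ≤ s) :
    HasDerivAt (fun t ↦ μ * H t + t * deriv H t)
      ((μ + 1) * deriv H s + s * deriv (deriv H) s) s := by
  have h₀ := (hH.analyticAt s hs).differentiableAt.hasDerivAt
  have h₁ := (hH.analyticAt s hs).deriv.differentiableAt.hasDerivAt
  exact ((h₀.const_mul μ).add ((hasDerivAt_id s).mul h₁)).congr_deriv (by simp only [id]; ring)

theorem deriv_eq_of_mul_add_mul_deriv_eq_zero (hH : IsProfile γ ε H) (hs : 0 < s)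
    (hD : 2 * ε + (γ - 1) * s ≠ 0) (h : μ * H s + s * deriv H s = 0) :
    (μ + 1) * deriv H s + s * deriv (deriv H) s =
      H s / s * (μ * (2 - μ) + (1 + μ) * (s / (2 * ε + (γ - 1) * s))) := by
  obtain ⟨D, hD_eq⟩ : ∃ D, D = 2 * ε + (γ - 1) * s := ⟨_, rfl⟩
  have ode : s * D * deriv (deriv H) s + (3 * D + s) * deriv H s - H s = 0 := by
    rw [hD_eq]
    linear_combination hH.ode s hs.le
  have hH' : deriv H s = -μ * H s / s := by
    rw [eq_div_iff hs.ne']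
    linear_combination h
  rw [← hD_eq] at hD ⊢
  rw [hH'] at ode ⊢
  field_simp at ode ⊢
  linear_combination ode

theorem mul_deriv_lt (hH : IsProfile γ ε H) (hell : IsUniformlyElliptic γ ε μ) (hs : 0 ≤ s) :
    s * deriv H s < H s := by
  suffices 0 < -(-1 * H s + s * deriv H s) by linarith
  refine pos_of_deriv_pos_of_eq_zero (f := fun t ↦ -(-1 * H t + t * deriv H t))
    (fun t ht ↦ (hH.hasDerivAt_mul_add_mul_deriv (-1) ht).neg) ?_ (fun t ht h ↦ ?_) hs
  · simpa using hH.pos 0 le_rfl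
  · rw [hH.deriv_eq_of_mul_add_mul_deriv_eq_zero ht (hell.ne_zero t ht.le) (neg_eq_zero.mp h)]
    have := div_pos (hH.pos t ht.le) ht
    linarith

theorem mul_add_mul_deriv_pos (hH : IsProfile γ ε H) (hell : IsUniformlyElliptic γ ε μ)
    (hs : 0 ≤ s) : 0 < μ * H s + s * deriv H s := by
  have hμ := hell.pos
  refine pos_of_deriv_pos_of_eq_zero (f := fun t ↦ μ * H t + t * deriv H t)
    (fun t ht ↦ hH.hasDerivAt_mul_add_mul_deriv μ ht) ?_ (fun t ht h ↦ ?_) hs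
  · simpa using mul_pos hμ (hH.pos 0 le_rfl)
  · rw [hH.deriv_eq_of_mul_add_mul_deriv_eq_zero ht (hell.ne_zero t ht.le) h]
    have hratio := hell.neg_lt_div t ht.le
    have hhalf := hell.lt_half
    refine mul_pos (div_pos (hH.pos t ht.le) ht) ?_
    nlinarith

theorem add_two_mul_mul_deriv_pos (hH : IsProfile γ ε H) (hell : IsUniformlyElliptic γ ε μ)
    (hs : 0 ≤ s) : 0 < H s + 2 * s * deriv H s := by
  nlinarith [hH.mul_add_mul_deriv_pos hell hs, hH.pos s hs, hell.lt_half]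

-- The expression is the second derivative of `r ↦ r² H(r²)` at `r² = s`.
theorem radial_second_deriv_pos (hH : IsProfile γ ε H) (hell : IsUniformlyElliptic γ ε μ)
    (hs : 0 ≤ s) : 0 < 2 * H s + 10 * s * deriv H s + 4 * s ^ 2 * deriv (deriv H) s := by
  have hD := hell.ne_zero s hs
  have hratio : 0 < 1 + 2 * (s / (2 * ε + (γ - 1) * s)) := by
    linarith [hell.neg_lt_div s hs, hell.lt_half]
  calc
    0 < 2 * (H s - s * deriv H s) * (1 + 2 * (s / (2 * ε + (γ - 1) * s))) := by
      have := sub_pos.mpr (hH.mul_deriv_lt hell hs)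
      positivity
    _ = _ := by
      have hcancel := mul_div_cancel₀ s hD
      refine mul_left_cancel₀ hD ?_
      linear_combination 4 * (H s - s * deriv H s) * hcancel - 4 * s * hH.ode s hs

theorem saddleHess_det_ne_zero (hH : IsProfile γ ε H) (hell : IsUniformlyElliptic γ ε μ)
    (z : ℝ × ℝ) : saddleHess₁₁ H z * saddleHess₂₂ H z - saddleHess₁₂ H z ^ 2 ≠ 0 := by
  obtain rfl | hz := eq_or_ne z 0
  · simp [saddleHess₁₁, saddleHess₂₂, saddleHess₁₂, (hH.pos 0 le_rfl).ne']
  have hs : 0 ≤ z.1 ^ 2 + z.2 ^ 2 := by positivity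
  have hJ := sub_pos.mpr (hH.mul_deriv_lt hell hs)
  have hR := hH.radial_second_deriv_pos hell hs
  have hK := hH.add_two_mul_mul_deriv_pos hell hs
  have offDiag : z.1 ^ 2 - z.2 ^ 2 ≠ 0 ∨ z.1 * z.2 ≠ 0 := by
    contrapose! hz
    have h₁ : z.1 = 0 := by
      refine pow_eq_zero_iff four_ne_zero |>.mp ?_
      linear_combination z.1 ^ 2 * hz.1 + z.1 * z.2 * hz.2
    have h₂ : z.2 = 0 := by
      refine pow_eq_zero_iff four_ne_zero |>.mp ?_
      linear_combination -z.2 ^ 2 * hz.1 + z.1 * z.2 * hz.2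
    exact Prod.ext h₁ h₂
  intro hdet
  have det_eq := sq_mul_saddleHess_det H z
  simp only [hdet, mul_zero] at det_eq
  refine (ne_of_gt ?_) (neg_eq_zero.mp det_eq.symm)
  obtain hd | hm := offDiag <;> positivity

theorem monotoneOn_rpow_mul (hH : IsProfile γ ε H) (hell : IsUniformlyElliptic γ ε μ) :
    MonotoneOn (fun s ↦ s ^ μ * H s) (Ioi 0) := by
  have hderiv (s : ℝ) (hs : 0 < s) : HasDerivAt (fun s ↦ s ^ μ * H s)
      (s ^ (μ - 1) * (μ * H s + s * deriv H s)) s := by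
    refine ((Real.hasDerivAt_rpow_const (.inl hs.ne')).mul
      (hH.analyticAt s hs.le).differentiableAt.hasDerivAt).congr_deriv ?_
    rw [Real.rpow_sub_one hs.ne']
    field_simp
  refine monotoneOn_of_hasDerivWithinAt_nonneg (convex_Ioi 0)
    (fun s hs ↦ (hderiv s hs).continuousAt.continuousWithinAt)
    (fun s hs ↦ (hderiv s (interior_subset hs)).hasDerivWithinAt) fun s hs ↦ ?_
  have hs' : 0 < s := interior_subset hs
  have := hH.mul_add_mul_deriv_pos hell hs'.le
  positivity

theorem tendsto_mul_sq (hH : IsProfile γ ε H) (hell : IsUniformlyElliptic γ ε μ) :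
    Tendsto (fun s ↦ s * H s ^ 2) atTop atTop := by
  have hH₁ := hH.pos 1 zero_le_one
  have hexp : 0 < 1 - 2 * μ := by linarith [hell.lt_half]
  refine tendsto_atTop_mono' atTop ?_
    ((tendsto_rpow_atTop hexp).const_mul_atTop (pow_pos hH₁ 2))
  filter_upwards [eventually_ge_atTop 1] with s hs
  have hs' : 0 < s := one_pos.trans_le hs
  have mono : H 1 ≤ s ^ μ * H s := by
    simpa using hH.monotoneOn_rpow_mul hell (mem_Ioi.mpr one_pos) hs' hs
  calc
    H 1 ^ 2 * s ^ (1 - 2 * μ) ≤ (s ^ μ * H s) ^ 2 * s ^ (1 - 2 * μ) := by gcongr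
    _ = s ^ (μ * 2) * s ^ (1 - 2 * μ) * H s ^ 2 := by
      rw [mul_pow, Real.rpow_mul hs'.le, Real.rpow_two]
      ring
    _ = s * H s ^ 2 := by
      rw [← Real.rpow_add hs', show μ * 2 + (1 - 2 * μ) = 1 by ring, Real.rpow_one]

theorem mul_sq_le_normSq_saddleGradient (hH : IsProfile γ ε H)
    (hell : IsUniformlyElliptic γ ε μ) (z : ℝ × ℝ) :
    (z.1 ^ 2 + z.2 ^ 2) * H (z.1 ^ 2 + z.2 ^ 2) ^ 2 ≤
      (saddleGradient H z).1 ^ 2 + (saddleGradient H z).2 ^ 2 := by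
  have hs : 0 ≤ z.1 ^ 2 + z.2 ^ 2 := by positivity
  obtain h0 | hs' := hs.eq_or_lt
  · rw [← h0, zero_mul]
    positivity
  refine le_of_mul_le_mul_left ?_ hs'
  have hpos := hH.pos _ hs
  have hK := hH.add_two_mul_mul_deriv_pos hell hs
  have normSq_eq := mul_saddleGradient_normSq H z
  generalize hs_eq : z.1 ^ 2 + z.2 ^ 2 = s at *
  rw [normSq_eq]
  calc
    s * (s * H s ^ 2) = H s ^ 2 * (z.1 ^ 2 - z.2 ^ 2) ^ 2 + H s ^ 2 * (2 * z.1 * z.2) ^ 2 := by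
      rw [← hs_eq]
      ring
    _ ≤ 4 * (H s + s * deriv H s) ^ 2 * (z.1 ^ 2 - z.2 ^ 2) ^ 2 +
        4 * H s ^ 2 * (2 * z.1 * z.2) ^ 2 := by
      gcongr
      · nlinarith
      · nlinarith [sq_nonneg (H s)]

theorem isProperMap_saddleGradient (hH : IsProfile γ ε H) (hell : IsUniformlyElliptic γ ε μ) :
    IsProperMap (saddleGradient H) := by
  refine isProperMap_iff_tendsto_cocompact.mpr
    ⟨(contDiff_saddleGradient hH.analyticAt).continuous, ?_⟩
  refine tendsto_cocompact_of_tendsto_normSq ?_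
  exact tendsto_atTop_mono (hH.mul_sq_le_normSq_saddleGradient hell)
    ((hH.tendsto_mul_sq hell).comp tendsto_normSq_cocompact)

theorem dual_equation_saddlePotential (hH : IsProfile γ ε H) (z : ℝ × ℝ) :
    (2 * ε + (γ + 1) * z.1 ^ 2 + (γ - 1) * z.2 ^ 2) * saddleHess₂₂ H z -
        4 * z.1 * z.2 * saddleHess₁₂ H z +
      (2 * ε + (γ - 1) * z.1 ^ 2 + (γ + 1) * z.2 ^ 2) * saddleHess₁₁ H z = 0 := by
  have ode := hH.ode (z.1 ^ 2 + z.2 ^ 2) (by positivity)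
  unfold saddleHess₁₁ saddleHess₁₂ saddleHess₂₂
  linear_combination 4 * (z.1 ^ 2 - z.2 ^ 2) * ode

theorem exists_solution (hH : IsProfile γ ε H) (hell : IsUniformlyElliptic γ ε μ) :
    ∃ u : ℝ × ℝ → ℝ, ContDiff ℝ 2 u ∧ (∀ p : ℝ × ℝ, Lop γ ε u p = 0) ∧
      ¬ ∃ a b c : ℝ, ∀ x y : ℝ, u (x, y) = a * x + b * y + c := by
  have analytic (z : ℝ × ℝ) : AnalyticAt ℝ H (z.1 ^ 2 + z.2 ^ 2) :=
    hH.analyticAt _ (by positivity)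
  exact exists_solution_of_legendre_dual
    (fun z ↦ hasFDerivAt_saddlePotential (analytic z).differentiableAt)
    (contDiff_saddleGradient hH.analyticAt)
    (fun z ↦ hasFDerivAt_saddleGradient (analytic z).differentiableAt
      (analytic z).deriv.differentiableAt)
    (hH.saddleHess_det_ne_zero hell) (hH.isProperMap_saddleGradient hell)
    hH.dual_equation_saddlePotential

end IsProfile

end Profile

section PowerSeries

variable {𝕜 : Type*} [NontriviallyNormedField 𝕜]

open FormalMultilinearSeries in
theorem hasFPowerSeriesOnBall_deriv_ofScalars [CompleteSpace 𝕜] {f : 𝕜 → 𝕜} {c : ℕ → 𝕜} {x : 𝕜}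
    {r : ENNReal} (h : HasFPowerSeriesOnBall f (ofScalars 𝕜 c) x r) :
    HasFPowerSeriesOnBall (deriv f) (ofScalars 𝕜 fun n ↦ (n + 1) * c (n + 1)) x r := by
  set q := (ContinuousLinearMap.apply 𝕜 𝕜 (1 : 𝕜)).compFormalMultilinearSeries
    (ofScalars 𝕜 c).derivSeries
  have q_coeff (n : ℕ) : q.coeff n = (n + 1) * c (n + 1) := by
    have hn := derivSeries_coeff_one (ofScalars 𝕜 c) n
    rwa [coeff_ofScalars, nsmul_eq_mul, Nat.cast_succ] at hn
  have q_eq : ofScalars 𝕜 (fun n ↦ (n + 1) * c (n + 1)) = q := by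
    funext n
    rw [← mkPiRing_coeff_eq q, q_coeff, ← mkPiRing_coeff_eq (ofScalars 𝕜 _), coeff_ofScalars]
  rw [q_eq]
  exact (ContinuousLinearMap.apply 𝕜 𝕜 1).comp_hasFPowerSeriesOnBall h.fderiv

theorem hasSum_of_hasFPowerSeriesOnBall_ofScalars {f : 𝕜 → 𝕜} {c : ℕ → 𝕜} {r : ENNReal} {x : 𝕜}
    (h : HasFPowerSeriesOnBall f (.ofScalars 𝕜 c) 0 r) (hx : x ∈ Metric.eball 0 r) :
    HasSum (fun n ↦ c n * x ^ n) (f x) := by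
  simpa [mul_comm] using h.hasSum hx

theorem hasSum_mul_pow_of_succ {c : ℕ → 𝕜} {x y : 𝕜} (h : HasSum (fun n ↦ c (n + 1) * x ^ n) y) :
    HasSum (fun n ↦ c n * x ^ n) (c 0 + x * y) := by
  rw [← hasSum_nat_add_iff' 1]
  simpa [pow_succ, mul_assoc, mul_comm, mul_left_comm] using h.mul_left x

end PowerSeries

section Hypergeometric

variable {𝕂 : Type*} [RCLike 𝕂] {a b c : 𝕂}

theorem one_le_radius_ordinaryHypergeometricSeries (a b c : 𝕂) :
    1 ≤ (ordinaryHypergeometricSeries 𝕂 a b c).radius := by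
  by_cases h : ∀ k : ℕ, ↑k ≠ -a ∧ ↑k ≠ -b ∧ ↑k ≠ -c
  · exact (ordinaryHypergeometricSeries_radius_eq_one 𝕂 a b c h).ge
  · push Not at h
    obtain ⟨k, h⟩ := h
    by_cases ha : (k : 𝕂) = -a
    · rw [← neg_neg a, ← ha, ordinaryHypergeometric_radius_top_of_neg_nat₁]
      exact le_top
    by_cases hb : (k : 𝕂) = -b
    · rw [← neg_neg b, ← hb, ordinaryHypergeometric_radius_top_of_neg_nat₂]
      exact le_top
    · rw [← neg_neg c, ← h ha hb, ordinaryHypergeometric_radius_top_of_neg_nat₃]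
      exact le_top

theorem hasFPowerSeriesOnBall_ordinaryHypergeometric (a b c : 𝕂) :
    HasFPowerSeriesOnBall (₂F₁ a b c : 𝕂 → 𝕂) (ordinaryHypergeometricSeries 𝕂 a b c) 0 1 :=
  have hr := one_le_radius_ordinaryHypergeometricSeries a b c
  (FormalMultilinearSeries.hasFPowerSeriesOnBall _ (one_pos.trans_le hr)).mono one_pos hr

theorem mul_ordinaryHypergeometricCoefficient_succ (hc : ∀ n : ℕ, c + n ≠ 0) (n : ℕ) :
    (n + c) * ((n + 1) * ordinaryHypergeometricCoefficient a b c (n + 1)) =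
      (n + a) * (n + b) * ordinaryHypergeometricCoefficient a b c n := by
  have hn : (n + 1 : 𝕂) ≠ 0 := Nat.cast_add_one_ne_zero n
  have hcn := hc n
  simp only [ordinaryHypergeometricCoefficient, ascPochhammer_succ_eval, Nat.factorial_succ,
    Nat.cast_mul, Nat.cast_succ, mul_inv]
  field_simp
  ring

theorem mem_eball_zero_one {E : Type*} [SeminormedAddCommGroup E] {x : E} :
    x ∈ Metric.eball 0 1 ↔ ‖x‖ < 1 := by
  rw [← ENNReal.ofReal_one, Metric.eball_ofReal, mem_ball_zero_iff]

theorem analyticAt_ordinaryHypergeometric (a b c : 𝕂) {x : 𝕂} (hx : ‖x‖ < 1) :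
    AnalyticAt 𝕂 (₂F₁ a b c : 𝕂 → 𝕂) x :=
  (hasFPowerSeriesOnBall_ordinaryHypergeometric a b c).analyticAt_of_mem (mem_eball_zero_one.mpr hx)

theorem ordinaryHypergeometric_ode (a b : 𝕂) (hc : ∀ n : ℕ, c + n ≠ 0) {x : 𝕂} (hx : ‖x‖ < 1) :
    x * (1 - x) * deriv (deriv (₂F₁ a b c)) x + (c - (a + b + 1) * x) * deriv (₂F₁ a b c) x -
      a * b * ₂F₁ a b c x = 0 := by
  set F : 𝕂 → 𝕂 := ₂F₁ a b c
  set u := ordinaryHypergeometricCoefficient a b c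
  have hF : HasFPowerSeriesOnBall F (.ofScalars 𝕂 u) 0 1 :=
    hasFPowerSeriesOnBall_ordinaryHypergeometric a b c
  have hF' := hasFPowerSeriesOnBall_deriv_ofScalars hF
  have hball : x ∈ Metric.eball (0 : 𝕂) 1 := mem_eball_zero_one.mpr hx
  have sum_F := hasSum_of_hasFPowerSeriesOnBall_ofScalars hF hball
  have sum_F' := hasSum_of_hasFPowerSeriesOnBall_ofScalars hF' hball
  have sum_F'' := hasSum_of_hasFPowerSeriesOnBall_ofScalars
    (hasFPowerSeriesOnBall_deriv_ofScalars hF') hball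
  have sum_xF' : HasSum (fun n : ℕ ↦ (n * u n) * x ^ n) (x * deriv F x) := by
    simpa using hasSum_mul_pow_of_succ (c := fun n ↦ n * u n) (by simpa using sum_F')
  have sum_xF'' : HasSum (fun n : ℕ ↦ (n * ((n + 1) * u (n + 1))) * x ^ n)
      (x * deriv (deriv F) x) := by
    simpa using hasSum_mul_pow_of_succ (c := fun n ↦ n * ((n + 1) * u (n + 1)))
      (by simpa using sum_F'')
  have sum_xxF'' : HasSum (fun n : ℕ ↦ ((n - 1) * (n * u n)) * x ^ n)
      (x * (x * deriv (deriv F) x)) := by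
    simpa using hasSum_mul_pow_of_succ (c := fun n ↦ (n - 1) * (n * u n))
      (by simpa using sum_xF'')
  have eq : x * deriv (deriv F) x + c * deriv F x =
      x * (x * deriv (deriv F) x) + (a + b + 1) * (x * deriv F x) + a * b * F x := by
    refine (sum_xF''.add (sum_F'.mul_left c)).unique ?_
    convert (sum_xxF''.add (sum_xF'.mul_left (a + b + 1))).add (sum_F.mul_left (a * b)) using 2
      with n
    linear_combination x ^ n * mul_ordinaryHypergeometricCoefficient_succ (a := a) (b := b) hc n
  linear_combination eq

theorem ordinaryHypergeometric_pos {a b c x : ℝ} (ha : 0 < a) (hb : 0 < b) (hc : 0 < c)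
    (hx₀ : 0 ≤ x) (hx₁ : x < 1) : 0 < ₂F₁ a b c x := by
  have hsum := hasSum_of_hasFPowerSeriesOnBall_ofScalars
    (hasFPowerSeriesOnBall_ordinaryHypergeometric a b c) (x := x)
    (mem_eball_zero_one.mpr (by rwa [Real.norm_of_nonneg hx₀]))
  refine one_pos.trans_le ?_
  simpa [ordinaryHypergeometricCoefficient] using le_hasSum hsum 0 fun n _ ↦ by
    have := ascPochhammer_pos n a ha
    have := ascPochhammer_pos n b hb
    have := ascPochhammer_pos n c hc
    positivity

end Hypergeometric

section Pfaff

/-- Pfaff's transformation. It turns `₂F₁ a b c` into the continuation of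
`s ↦ ₂F₁ a (c - b) c (-s)` from `[0, 1)` to `[0, ∞)`, since `s / (1 + s) ∈ [0, 1)` for `s ≥ 0`. -/
noncomputable def pfaffTransform (a : ℝ) (F : ℝ → ℝ) (s : ℝ) : ℝ :=
  (1 + s) ^ (-a) * F (s / (1 + s))

variable {a s : ℝ} {F : ℝ → ℝ}

theorem hasDerivAt_pfaffTransform (hs : -1 < s) (hF : DifferentiableAt ℝ F (s / (1 + s))) :
    HasDerivAt (pfaffTransform a F)
      (pfaffTransform (a + 1) (fun t ↦ (1 - t) * deriv F t - a * F t) s) s := by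
  have hs' : 0 < 1 + s := by linarith
  have one_add : HasDerivAt (fun r : ℝ ↦ 1 + r) 1 s := (hasDerivAt_id s).const_add 1
  have quotient : HasDerivAt (fun r ↦ r / (1 + r)) ((1 * (1 + s) - s * 1) / (1 + s) ^ 2) s :=
    (hasDerivAt_id s).div one_add hs'.ne'
  refine ((one_add.rpow_const (p := -a) (.inl hs'.ne')).mul
    (hF.hasDerivAt.comp s quotient)).congr_deriv ?_
  have hpow : (1 + s) ^ (-a) = (1 + s) ^ (-(a + 1)) * (1 + s) := by
    rw [← Real.rpow_add_one hs'.ne']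
    ring_nf
  rw [pfaffTransform, hpow, show -a - 1 = -(a + 1) by ring]
  dsimp only [Function.comp]
  field_simp
  ring

theorem analyticAt_pfaffTransform (hs : -1 < s) (hF : AnalyticAt ℝ F (s / (1 + s))) :
    AnalyticAt ℝ (pfaffTransform a F) s := by
  have hs' : 0 < 1 + s := by linarith
  have one_add : AnalyticAt ℝ (fun r : ℝ ↦ 1 + r) s := by fun_prop
  have factor : AnalyticAt ℝ (fun r : ℝ ↦ (1 + r) ^ (-a)) s :=
    (one_add.contDiffAt.rpow_const_of_ne hs'.ne').analyticAt
  exact factor.mul (hF.comp (f := fun r ↦ r / (1 + r)) (analyticAt_id.div one_add hs'.ne'))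

theorem deriv_deriv_pfaffTransform (hs : -1 < s) (hF : AnalyticAt ℝ F (s / (1 + s))) :
    deriv (deriv (pfaffTransform a F)) s =
      pfaffTransform (a + 2) (fun t ↦ (1 - t) ^ 2 * deriv (deriv F) t -
        2 * (a + 1) * (1 - t) * deriv F t + a * (a + 1) * F t) s := by
  have hs' : 0 < 1 + s := by linarith
  have quotient : ContinuousAt (fun r : ℝ ↦ r / (1 + r)) s :=
    continuousAt_id.div (by fun_prop) hs'.ne'
  have deriv_eq : deriv (pfaffTransform a F) =ᶠ[𝓝 s]
      pfaffTransform (a + 1) (fun t ↦ (1 - t) * deriv F t - a * F t) := by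
    filter_upwards [lt_mem_nhds hs, quotient.eventually hF.eventually_analyticAt] with r hr hFr
    exact (hasDerivAt_pfaffTransform hr hFr.differentiableAt).deriv
  have hinner : HasDerivAt (fun t ↦ (1 - t) * deriv F t - a * F t)
      (-1 * deriv F (s / (1 + s)) + (1 - s / (1 + s)) * deriv (deriv F) (s / (1 + s)) -
        a * deriv F (s / (1 + s))) (s / (1 + s)) :=
    (((hasDerivAt_id _).const_sub 1).mul hF.deriv.differentiableAt.hasDerivAt).sub
      (hF.differentiableAt.hasDerivAt.const_mul a)
  rw [deriv_eq.deriv_eq, (hasDerivAt_pfaffTransform hs hinner.differentiableAt).deriv,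
    pfaffTransform, pfaffTransform, hinner.deriv, show a + 1 + 1 = a + 2 by ring]
  ring

end Pfaff

section ProfileExistence

theorem norm_div_one_add_lt_one {s : ℝ} (hs : 0 ≤ s) : ‖s / (1 + s)‖ < 1 := by
  rw [Real.norm_of_nonneg (by positivity), div_lt_one (by positivity)]
  linarith

theorem pfaffTransform_ordinaryHypergeometric_ode (a b : ℝ) {c s : ℝ} (hc : ∀ n : ℕ, c + n ≠ 0)
    (hs : 0 ≤ s) :
    s * (1 + s) * deriv (deriv (pfaffTransform a (₂F₁ a b c))) s +
      (c + (a + c - b + 1) * s) * deriv (pfaffTransform a (₂F₁ a b c)) s +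
      a * (c - b) * pfaffTransform a (₂F₁ a b c) s = 0 := by
  have hs' : 0 < 1 + s := by linarith
  have ht := norm_div_one_add_lt_one hs
  have hF := analyticAt_ordinaryHypergeometric a b c ht
  have ode := ordinaryHypergeometric_ode a b hc ht
  rw [deriv_deriv_pfaffTransform (by linarith) hF,
    (hasDerivAt_pfaffTransform (by linarith) hF.differentiableAt).deriv]
  have hpow₁ : (1 + s) ^ (-(a + 1)) = (1 + s) ^ (-(a + 2)) * (1 + s) := by
    rw [← Real.rpow_add_one hs'.ne']
    ring_nf
  have hpow₀ : (1 + s) ^ (-a) = (1 + s) ^ (-(a + 2)) * (1 + s) ^ 2 := by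
    rw [← Real.rpow_natCast, ← Real.rpow_add hs']
    norm_num
  have hone : 1 - s / (1 + s) = 1 / (1 + s) := by field_simp; ring
  simp only [pfaffTransform, hpow₀, hpow₁, hone]
  rw [hone] at ode
  generalize (1 + s) ^ (-(a + 2)) = P
  field_simp at ode ⊢
  linear_combination P * ode

theorem exists_hypergeometric_parameters {β : ℝ} (hβ : -1 / 2 < β) :
    ∃ a b : ℝ, 0 < a ∧ 0 < b ∧ a - b + 1 = β ∧ a * (3 - b) = -β := by
  -- Eliminating `b` leaves `a² - (β + 2) a - β = 0`.
  have hdisc : 0 < β ^ 2 + 8 * β + 4 := by nlinarith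
  set r := √(β ^ 2 + 8 * β + 4)
  have hr : r ^ 2 = β ^ 2 + 8 * β + 4 := Real.sq_sqrt hdisc.le
  have hr₀ : 0 < r := Real.sqrt_pos.mpr hdisc
  have hrβ : β - 4 < r := lt_of_not_ge fun h ↦ by nlinarith
  refine ⟨(2 + β + r) / 2, (4 - β + r) / 2, by linarith, by linarith, by ring, ?_⟩
  linear_combination -hr / 4

theorem isProfile_of_one {ε : ℝ} (hε : 0 < ε) : IsProfile 1 ε (fun s ↦ 1 + s / (6 * ε)) where
  analyticAt s _ := by fun_prop
  pos s hs := by positivity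
  ode s _ := by
    have hderiv : deriv (fun s ↦ 1 + s / (6 * ε)) = fun _ ↦ 1 / (6 * ε) := by
      funext s
      simp
    rw [hderiv, deriv_const]
    field_simp
    ring

theorem isProfile_comp_mul_left {γ ε ν : ℝ} {y : ℝ → ℝ} (hν : 0 < ν) (hγ : γ ≠ 1)
    (hν_mul : ν * (2 * ε) = γ - 1) (analytic : ∀ t, 0 ≤ t → AnalyticAt ℝ y t)
    (pos : ∀ t, 0 ≤ t → 0 < y t)
    (ode : ∀ t, 0 ≤ t → t * (1 + t) * deriv (deriv y) t +
      (3 + (3 + 1 / (γ - 1)) * t) * deriv y t - 1 / (γ - 1) * y t = 0) :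
    IsProfile γ ε fun s ↦ y (ν * s) where
  analyticAt s hs := (analytic (ν * s) (by positivity)).comp (f := fun s ↦ ν * s) (by fun_prop)
  pos s hs := pos (ν * s) (by positivity)
  ode s hs := by
    have h₁ : deriv (fun s ↦ y (ν * s)) = fun s ↦ ν * deriv y (ν * s) := by
      funext s
      rw [deriv_comp_mul_left, smul_eq_mul]
    have h₂ : deriv (fun s ↦ ν * deriv y (ν * s)) s = ν * (ν * deriv (deriv y) (ν * s)) := by
      rw [deriv_const_mul_field, deriv_comp_mul_left, smul_eq_mul]
    have hγ_mul : 1 / (γ - 1) * (γ - 1) = 1 := one_div_mul_cancel (sub_ne_zero.mpr hγ)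
    rw [h₁, h₂]
    linear_combination (γ - 1) * ode (ν * s) (by positivity) +
      (ν * s * deriv (deriv y) (ν * s) + 3 * deriv y (ν * s)) * hν_mul -
      (ν * s * deriv y (ν * s) - y (ν * s)) * hγ_mul

theorem exists_isProfile_of_pos {γ ε : ℝ} (hν : 0 < (γ - 1) / (2 * ε))
    (hβ : -1 / 2 < 1 / (γ - 1)) : ∃ H, IsProfile γ ε H := by
  obtain ⟨a, b, ha, hb, hab, hab'⟩ := exists_hypergeometric_parameters hβ
  have hγε : γ - 1 ≠ 0 ∧ 2 * ε ≠ 0 := div_ne_zero_iff.mp hν.ne'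
  refine ⟨_, isProfile_comp_mul_left (y := pfaffTransform a (₂F₁ a b 3)) hν
    (sub_ne_zero.mp hγε.1) (div_mul_cancel₀ _ hγε.2) (fun t ht ↦ ?_) (fun t ht ↦ ?_)
    (fun t ht ↦ ?_)⟩
  · exact analyticAt_pfaffTransform (by linarith)
      (analyticAt_ordinaryHypergeometric a b 3 (norm_div_one_add_lt_one ht))
  · have : 0 < ₂F₁ a b 3 (t / (1 + t)) := ordinaryHypergeometric_pos ha hb three_pos
      (by positivity) ((div_lt_one (by positivity)).mpr (by linarith))
    unfold pfaffTransform
    positivity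
  · have ode := pfaffTransform_ordinaryHypergeometric_ode a b (c := 3) (fun n ↦ by positivity) ht
    rw [hab', show a + 3 - b + 1 = 3 + 1 / (γ - 1) by linarith] at ode
    linear_combination ode

theorem exists_isProfile {γ ε : ℝ} (h : (1 ≤ γ ∧ 0 < ε) ∨ (γ < -1 ∧ ε < 0)) :
    ∃ H, IsProfile γ ε H := by
  obtain ⟨hγ, hε⟩ | ⟨hγ, hε⟩ := h
  · obtain rfl | hγ := hγ.eq_or_lt
    · exact ⟨_, isProfile_of_one hε⟩
    · have := sub_pos.mpr hγ
      refine exists_isProfile_of_pos (by positivity) ?_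
      exact (by norm_num : (-1 / 2 : ℝ) < 0).trans (by positivity)
  · refine exists_isProfile_of_pos (div_pos_of_neg_of_neg (by linarith) (by linarith)) ?_
    rw [lt_div_iff_of_neg (by linarith)]
    linarith

end ProfileExistence

/-- For `(γ ≥ 1, ε > 0)` or `(γ < −1, ε < 0)` the equation `L_{γ,ε}[u] = 0` admits an
entire non-linear `C²` solution, i.e. it does not have the Bernstein property. -/
theorem Lop_not_bernstein (γ ε : ℝ)
    (h : (1 ≤ γ ∧ 0 < ε) ∨ (γ < -1 ∧ ε < 0)) :
    ∃ u : ℝ × ℝ → ℝ, ContDiff ℝ 2 u ∧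
      (∀ p : ℝ × ℝ, Lop γ ε u p = 0) ∧
      ¬ ∃ a b c : ℝ, ∀ x y : ℝ, u (x, y) = a * x + b * y + c := by
  obtain ⟨μ, hell⟩ := exists_isUniformlyElliptic h
  obtain ⟨H, hH⟩ := exists_isProfile h
  exact hH.exists_solution hell
end

section
/- (Nitsche criterion) Let F : [0,∞) → ℝ be of class C² with F'(w) > 0 and F'(w) + 2w·F''(w) > 0 for all w ≥ 0 (so that ∫_{ℝ²} F(|Du|²) dx is a regular variational integral). Set λ(w) := 2·F''(w)/F'(w). If the integral ∫₁^∞ ((1 + w·λ(w)) / (2 + w·λ(w))) · (dw/w) diverges, then there exists a C² function u : ℝ² → ℝ, not affine linear, satisfying the Euler–Lagrange equation F'(|Du|²)·(u_xx + u_yy) + 2·F''(|Du|²)·(u_x²·u_xx + 2·u_x·u_y·u_xy + u_y²·u_yy) = 0 at every point of ℝ². -/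
open Filter

/- The Legendre transformation turns the Euler–Lagrange equation into a linear equation on the
gradient plane, which in polar coordinates `θ`, `r = exp t = |Du|` has the solution
`r (h (log r) sin θ + θ cos θ)`, where `k = h'` satisfies `k' = m (2 - k) - k` and
`m = 1 + w λ(w)` at `w = r ^ 2`. This solution is multivalued on the punctured gradient plane, but
its gradient `(x, y)` is a function of `(θ, t)`, whose Jacobian determinant
`(k cos θ) ^ 2 + m ((2 - k) sin θ) ^ 2` is positive as soon as `0 < k < 2`. Since `x - θ` and
`y - h(t)` are bounded, `(θ, t) ↦ (x, y)` is a diffeomorphism of the plane once `h` tends to `±∞`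
at `±∞`. At `+∞` this follows from the divergence of the integral and at `-∞` from `m → 1`, because
`m / (1 + m) ≤ k + m (2 - k) = (2 h + k)'`. The inverse Legendre transformation then gives an entire
solution. -/

open Topology Real

lemma det_prod_eq_mul_sub_mul {R : Type*} [CommRing R] [TopologicalSpace R]
    (L : R × R →L[R] R × R) :
    L.det = (L (1, 0)).1 * (L (0, 1)).2 - (L (0, 1)).1 * (L (1, 0)).2 := by
  rw [ContinuousLinearMap.det, ← LinearMap.det_toMatrix (Module.Basis.finTwoProd R),
    Matrix.det_fin_two]
  simp [LinearMap.toMatrix_apply]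

lemma apply_eq_smul_add_smul {R E : Type*} [Semiring R] [TopologicalSpace R] [AddCommMonoid E]
    [TopologicalSpace E] [Module R E] (L : R × R →L[R] E) (v : R × R) :
    L v = v.1 • L (1, 0) + v.2 • L (0, 1) := by
  rw [← map_smul, ← map_smul, ← map_add]
  simp

lemma hasDerivAt_levelCurve {𝕜 : Type*} [NontriviallyNormedField 𝕜] [CompleteSpace 𝕜]
    {f : 𝕜 × 𝕜 → 𝕜} {f' : 𝕜 × 𝕜 →L[𝕜] 𝕜} {g : 𝕜 → 𝕜 → 𝕜}
    (hgf : ∀ x t, g (f (x, t)) t = x) (hfg : ∀ c t, f (g c t, t) = c) {c t : 𝕜}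
    (hf : HasStrictFDerivAt f f' (g c t, t)) (hf' : f' (1, 0) ≠ 0) :
    HasDerivAt (g c) (-f' (0, 1) / f' (1, 0)) t := by
  set L : 𝕜 × 𝕜 →L[𝕜] 𝕜 × 𝕜 := f'.prod (.snd 𝕜 𝕜 𝕜)
  have hL : L.det ≠ 0 := by simpa [det_prod_eq_mul_sub_mul, L] using hf'
  have hinv := HasStrictFDerivAt.to_local_left_inverse (f := fun q => (f q, q.2))
    (f' := L.toContinuousLinearEquivOfDetNeZero hL) (g := fun p => (g p.1 p.2, p.2))
    (hf.prodMk hasStrictFDerivAt_snd) (.of_forall fun q => by simp [hgf])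
  rw [hfg] at hinv
  have hcurve := hinv.fst.hasFDerivAt.comp_hasDerivAt t
    ((hasDerivAt_const t c).prodMk (hasDerivAt_id t))
  refine hcurve.congr_deriv (congrArg Prod.fst (?_ : _ = (-f' (0, 1) / f' (1, 0), (1 : 𝕜))))
  refine (ContinuousLinearEquiv.symm_apply_eq _).2 ?_
  rw [ContinuousLinearMap.toContinuousLinearEquivOfDetNeZero_apply]
  refine Prod.ext ?_ rfl
  change 0 = f' (-f' (0, 1) / f' (1, 0), 1)
  rw [apply_eq_smul_add_smul]
  simp [hf']

lemma bijective_of_levelCurves {α β γ δ : Type*} {f : α × β → γ × δ}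
    (g : γ → β → α) (hgf : ∀ x t, g (f (x, t)).1 t = x) (hfg : ∀ c t, (f (g c t, t)).1 = c)
    (hf : ∀ c, Function.Bijective fun t => (f (g c t, t)).2) : Function.Bijective f := by
  constructor
  · rintro ⟨x, t⟩ ⟨x', t'⟩ h
    have ht : t = t' := (hf (f (x, t)).1).1 <| by
      simp only [hgf]
      rw [h, hgf]
    subst ht
    rw [← hgf x t, h, hgf]
  · rintro ⟨c, d⟩
    obtain ⟨t, ht⟩ := (hf c).2 d
    exact ⟨(g c t, t), Prod.ext (hfg c t) ht⟩

lemma bijective_of_hasDerivAt_pos {f f' : ℝ → ℝ} (hf : ∀ x, HasDerivAt f (f' x) x)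
    (hf' : ∀ x, 0 < f' x) (htop : Tendsto f atTop atTop) (hbot : Tendsto f atBot atBot) :
    Function.Bijective f :=
  ⟨(strictMono_of_deriv_pos fun x => (hf x).deriv ▸ hf' x).injective,
    (continuous_iff_continuousAt.2 fun x => (hf x).continuousAt).surjective htop hbot⟩

/- The level curves of the first component are graphs over the second coordinate, and along them
the second component has derivative `det f' / ∂₁f₁ > 0`. -/
theorem bijective_of_hasStrictFDerivAt_det_pos {f : ℝ × ℝ → ℝ × ℝ}
    {f' : ℝ × ℝ → ℝ × ℝ →L[ℝ] ℝ × ℝ} (hf : ∀ q, HasStrictFDerivAt f (f' q) q)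
    (hfst : ∀ q, 0 < (f' q (1, 0)).1) (hdet : ∀ q, 0 < (f' q).det)
    (hfst_top : Tendsto (fun q => (f q).1) (atTop ×ˢ ⊤) atTop)
    (hfst_bot : Tendsto (fun q => (f q).1) (atBot ×ˢ ⊤) atBot)
    (hsnd_top : Tendsto (fun q => (f q).2) (⊤ ×ˢ atTop) atTop)
    (hsnd_bot : Tendsto (fun q => (f q).2) (⊤ ×ˢ atBot) atBot) : Function.Bijective f := by
  have hrow (t : ℝ) : Function.Bijective fun x => (f (x, t)).1 :=
    bijective_of_hasDerivAt_pos (f' := fun x => (f' (x, t) (1, 0)).1)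
      (fun x => (hf (x, t)).fst.hasFDerivAt.comp_hasDerivAt (f := fun x => (x, t)) x
        ((hasDerivAt_id x).prodMk (hasDerivAt_const x t)))
      (fun x => hfst (x, t))
      (hfst_top.comp (tendsto_id.prodMk tendsto_top))
      (hfst_bot.comp (tendsto_id.prodMk tendsto_top))
  choose g hfg using fun (c t : ℝ) => (hrow t).2 c
  have hgf (x t : ℝ) : g (f (x, t)).1 t = x := (hrow t).1 (hfg _ t)
  refine bijective_of_levelCurves g hgf hfg fun c => ?_
  have hcurve (t : ℝ) := (hf (g c t, t)).snd.hasFDerivAt.comp_hasDerivAt t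
    (f := fun t => (g c t, t))
    ((hasDerivAt_levelCurve hgf hfg (hf (g c t, t)).fst (hfst _).ne').prodMk (hasDerivAt_id t))
  refine bijective_of_hasDerivAt_pos
    (f' := fun t => (f' (g c t, t)).det / (f' (g c t, t) (1, 0)).1)
    (fun t => (hcurve t).congr_deriv ?_) (fun t => div_pos (hdet _) (hfst _))
    (hsnd_top.comp (tendsto_top.prodMk tendsto_id))
    (hsnd_bot.comp (tendsto_top.prodMk tendsto_id))
  have hne := (hfst (g c t, t)).ne'
  rw [apply_eq_smul_add_smul, det_prod_eq_mul_sub_mul]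
  simp only [ContinuousLinearMap.comp_apply, ContinuousLinearMap.coe_fst',
    ContinuousLinearMap.coe_snd', smul_eq_mul]
  field_simp
  ring

lemma tendsto_integral_atBot_of_tendsto_pos {f : ℝ → ℝ} {c : ℝ} (hf : Continuous f) (hc : 0 < c)
    (hfc : Tendsto f atBot (𝓝 c)) (a : ℝ) :
    Tendsto (fun t => ∫ x in a..t, f x) atBot atBot := by
  obtain ⟨T, hT⟩ := eventually_atBot.1 (hfc.eventually_const_le (half_lt_self hc))
  refine tendsto_atBot_mono' atBot ?_ (tendsto_atBot_add_const_left _ (∫ x in a..T, f x)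
    ((tendsto_atBot_add_const_right _ (-T) tendsto_id).const_mul_atBot (half_pos hc)))
  filter_upwards [eventually_le_atBot T] with t ht
  have hle : ∫ _ in t..T, c / 2 ≤ ∫ x in t..T, f x :=
    intervalIntegral.integral_mono_on ht (by simp) (hf.intervalIntegrable t T)
      fun x hx => hT x hx.2
  rw [intervalIntegral.integral_const, smul_eq_mul] at hle
  rw [← intervalIntegral.integral_add_adjacent_intervals (hf.intervalIntegrable a T)
    (hf.intervalIntegrable T t), intervalIntegral.integral_symm t T, id]
  linarith

lemma ux_affine (a b c : ℝ) (p : ℝ × ℝ) : ux (fun p => a * p.1 + b * p.2 + c) p = a := by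
  have hfst : HasFDerivAt (Prod.fst : ℝ × ℝ → ℝ) (.fst ℝ ℝ ℝ) p := hasFDerivAt_fst
  have hsnd : HasFDerivAt (Prod.snd : ℝ × ℝ → ℝ) (.snd ℝ ℝ ℝ) p := hasFDerivAt_snd
  rw [ux, (((hfst.const_mul a).fun_add (hsnd.const_mul b)).add_const c).fderiv]
  simp

lemma differentiable_ux {u : ℝ × ℝ → ℝ} (hu : ContDiff ℝ 2 u) : Differentiable ℝ (ux u) :=
  ((hu.fderiv_right (m := 1) le_rfl).clm_apply contDiff_const).differentiable one_ne_zero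

lemma differentiable_uy {u : ℝ × ℝ → ℝ} (hu : ContDiff ℝ 2 u) : Differentiable ℝ (uy u) :=
  ((hu.fderiv_right (m := 1) le_rfl).clm_apply contDiff_const).differentiable one_ne_zero

lemma fderiv_uy_one_zero {u : ℝ × ℝ → ℝ} (hu : ContDiff ℝ 2 u) (p : ℝ × ℝ) :
    fderiv ℝ (uy u) p (1, 0) = uxy u p := by
  have hDu : DifferentiableAt ℝ (fderiv ℝ u) p :=
    (hu.fderiv_right (m := 1) le_rfl).differentiable one_ne_zero p
  have hsymm : IsSymmSndFDerivAt ℝ u p := hu.contDiffAt.isSymmSndFDerivAt (by simp)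
  unfold uxy ux uy
  rw [fderiv_clm_apply hDu (differentiableAt_const _),
    fderiv_clm_apply hDu (differentiableAt_const _)]
  simpa using hsymm (1, 0) (0, 1)

/-- The unit vector in direction `θ`, radial in polar coordinates. -/
noncomputable def radialUnit (θ : ℝ) : ℝ × ℝ := (cos θ, sin θ)

/-- The unit vector orthogonal to `radialUnit θ`, in the direction of increasing angle. -/
noncomputable def angularUnit (θ : ℝ) : ℝ × ℝ := (-sin θ, cos θ)

/-- The gradient with polar coordinates `q = (θ, t)`: angle `θ` and length `exp t`. -/
noncomputable def polarGradient (q : ℝ × ℝ) : ℝ × ℝ := exp q.2 • radialUnit q.1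

/-- The gradient, at the gradient-plane point with polar coordinates `q = (θ, t)`, `r = exp t`, of
the Legendre transform `r (h (log r) sin θ + θ cos θ)`, when `k` is the derivative of `h`. -/
noncomputable def hodographMap (h k : ℝ → ℝ) (q : ℝ × ℝ) : ℝ × ℝ :=
  (q.1 + (k q.2 - 1) * (sin q.1 * cos q.1), h q.2 + k q.2 * sin q.1 ^ 2 + cos q.1 ^ 2)

/-- The derivative of `hodographMap h k` along a profile: `∂_θ` and `∂_t` are expanded in the polar
frame, with matrix `(b, m a; -a, b)` where `a = (2 - k) sin θ` and `b = k cos θ`. -/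
noncomputable def hodographDeriv (k m : ℝ → ℝ) (q : ℝ × ℝ) : ℝ × ℝ →L[ℝ] ℝ × ℝ :=
  (ContinuousLinearMap.fst ℝ ℝ ℝ).smulRight
      ((k q.2 * cos q.1) • radialUnit q.1 - ((2 - k q.2) * sin q.1) • angularUnit q.1) +
    (ContinuousLinearMap.snd ℝ ℝ ℝ).smulRight
      ((m q.2 * ((2 - k q.2) * sin q.1)) • radialUnit q.1 + (k q.2 * cos q.1) • angularUnit q.1)

lemma hodographDeriv_one_zero (k m : ℝ → ℝ) (q : ℝ × ℝ) : hodographDeriv k m q (1, 0) =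
    (k q.2 * cos q.1 * cos q.1 + (2 - k q.2) * sin q.1 * sin q.1,
      k q.2 * cos q.1 * sin q.1 - (2 - k q.2) * sin q.1 * cos q.1) := by
  simp [hodographDeriv, radialUnit, angularUnit]

lemma hodographDeriv_zero_one (k m : ℝ → ℝ) (q : ℝ × ℝ) : hodographDeriv k m q (0, 1) =
    (m q.2 * ((2 - k q.2) * sin q.1) * cos q.1 - k q.2 * cos q.1 * sin q.1,
      m q.2 * ((2 - k q.2) * sin q.1) * sin q.1 + k q.2 * cos q.1 * cos q.1) := by
  simp [hodographDeriv, radialUnit, angularUnit, sub_eq_add_neg]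

lemma det_hodographDeriv (k m : ℝ → ℝ) (q : ℝ × ℝ) : (hodographDeriv k m q).det =
    (k q.2 * cos q.1) ^ 2 + m q.2 * ((2 - k q.2) * sin q.1) ^ 2 := by
  rw [det_prod_eq_mul_sub_mul, hodographDeriv_one_zero, hodographDeriv_zero_one]
  linear_combination ((k q.2 * cos q.1) ^ 2 + m q.2 * ((2 - k q.2) * sin q.1) ^ 2) *
    sin_sq_add_cos_sq q.1

/-- Data `h, k = h'` for which `r (h (log r) sin θ + θ cos θ)` solves the linear equation that the
Legendre transformation associates with `m u_nn + u_ττ = 0`; here `n` is the direction of `Du`, `τ`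
is orthogonal to it, and the ellipticity ratio `m` is a function of `t = log |Du|`. The bounds
`0 < k < 2` make the Jacobian determinant of `hodographMap h k` positive. -/
structure IsHodographProfile (h k m : ℝ → ℝ) : Prop where
  hasDerivAt_fst : ∀ t, HasDerivAt h (k t) t
  hasDerivAt_snd : ∀ t, HasDerivAt k (m t * (2 - k t) - k t) t
  continuous_ratio : Continuous m
  ratio_pos : ∀ t, 0 < m t
  pos : ∀ t, 0 < k t
  lt_two : ∀ t, k t < 2

namespace IsHodographProfile

variable {h k m : ℝ → ℝ} (hp : IsHodographProfile h k m)
include hp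

lemma continuous_snd : Continuous k :=
  continuous_iff_continuousAt.2 fun t => (hp.hasDerivAt_snd t).continuousAt

lemma div_one_add_le (t : ℝ) : m t / (1 + m t) ≤ k t + m t * (2 - k t) := by
  have hm := hp.ratio_pos t
  have hk := hp.pos t
  have hk2 := hp.lt_two t
  rcases le_total 1 (k t) with h1 | h1
  · have : m t / (1 + m t) ≤ 1 := (div_le_one (by linarith)).2 (by linarith)
    nlinarith
  · have : m t / (1 + m t) ≤ m t := div_le_self hm.le (by linarith)
    nlinarith

lemma monotone_sub_integral :
    Monotone fun t => 2 * h t + k t - ∫ x in (0 : ℝ)..t, m x / (1 + m x) := by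
  have hcont : Continuous fun x => m x / (1 + m x) :=
    hp.continuous_ratio.div (continuous_const.add hp.continuous_ratio) fun x => by
      linarith [hp.ratio_pos x]
  have hderiv (t : ℝ) := (((hp.hasDerivAt_fst t).const_mul 2).add (hp.hasDerivAt_snd t)).sub
    (hcont.integral_hasStrictDerivAt 0 t).hasDerivAt
  refine monotone_of_hasDerivAt_nonneg hderiv fun t => ?_
  change 0 ≤ _
  linarith [hp.div_one_add_le t]

lemma tendsto_atTop
    (hI : Tendsto (fun t => ∫ x in (0 : ℝ)..t, m x / (1 + m x)) atTop atTop) :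
    Tendsto h atTop atTop := by
  refine tendsto_atTop_mono' atTop ?_
    ((tendsto_atTop_add_const_right _ (2 * h 0 + k 0 - 2) hI).const_mul_atTop one_half_pos)
  filter_upwards [eventually_ge_atTop 0] with t ht
  have hmono := hp.monotone_sub_integral ht
  simp only [intervalIntegral.integral_same] at hmono
  linarith [hp.lt_two t]

lemma tendsto_atBot
    (hI : Tendsto (fun t => ∫ x in (0 : ℝ)..t, m x / (1 + m x)) atBot atBot) :
    Tendsto h atBot atBot := by
  refine tendsto_atBot_mono' atBot ?_
    ((tendsto_atBot_add_const_right _ (2 * h 0 + k 0) hI).const_mul_atBot one_half_pos)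
  filter_upwards [eventually_le_atBot 0] with t ht
  have hmono := hp.monotone_sub_integral ht
  simp only [intervalIntegral.integral_same] at hmono
  linarith [hp.pos t]

lemma hasStrictFDerivAt_hodographMap (q : ℝ × ℝ) :
    HasStrictFDerivAt (hodographMap h k) (hodographDeriv k m q) q := by
  have hk_cont := hp.continuous_snd
  have hk'_cont : Continuous fun t => m t * (2 - k t) - k t :=
    (hp.continuous_ratio.mul (continuous_const.sub hk_cont)).sub hk_cont
  have hh : HasStrictFDerivAt (fun q : ℝ × ℝ => h q.2) (k q.2 • .snd ℝ ℝ ℝ) q :=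
    (hasStrictDerivAt_of_hasDerivAt_of_continuousAt (.of_forall hp.hasDerivAt_fst)
      hk_cont.continuousAt).comp_hasStrictFDerivAt (f := Prod.snd) q hasStrictFDerivAt_snd
  have hk : HasStrictFDerivAt (fun q : ℝ × ℝ => k q.2)
      ((m q.2 * (2 - k q.2) - k q.2) • .snd ℝ ℝ ℝ) q :=
    (hasStrictDerivAt_of_hasDerivAt_of_continuousAt (.of_forall hp.hasDerivAt_snd)
      hk'_cont.continuousAt).comp_hasStrictFDerivAt (f := Prod.snd) q hasStrictFDerivAt_snd
  have hfst : HasStrictFDerivAt (Prod.fst : ℝ × ℝ → ℝ) (.fst ℝ ℝ ℝ) q := hasStrictFDerivAt_fst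
  refine ((hfst.add ((hk.sub_const 1).mul (hfst.sin.mul hfst.cos))).prodMk
    ((hh.add (hk.mul (hfst.sin.pow 2))).add (hfst.cos.pow 2))).congr_fderiv ?_
  have := sin_sq_add_cos_sq q.1
  ext <;> simp [hodographDeriv, radialUnit, angularUnit] <;> grind

lemma det_hodographDeriv_pos (q : ℝ × ℝ) : 0 < (hodographDeriv k m q).det := by
  have hk := hp.pos q.2
  have hk2 : 0 < 2 - k q.2 := sub_pos.2 (hp.lt_two q.2)
  have hm := hp.ratio_pos q.2
  rw [det_hodographDeriv]
  rcases eq_or_ne (sin q.1) 0 with hs | hs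
  · have hc : cos q.1 ^ 2 = 1 := by nlinarith [sin_sq_add_cos_sq q.1]
    rw [hs, mul_pow, hc]
    positivity
  · positivity

lemma hodographDeriv_one_zero_fst_pos (q : ℝ × ℝ) : 0 < (hodographDeriv k m q (1, 0)).1 := by
  have hk := hp.pos q.2
  have hk2 : 0 < 2 - k q.2 := sub_pos.2 (hp.lt_two q.2)
  have hX : (hodographDeriv k m q (1, 0)).1 =
      k q.2 * cos q.1 ^ 2 + (2 - k q.2) * sin q.1 ^ 2 := by
    rw [hodographDeriv_one_zero]
    ring
  rw [hX]
  rcases eq_or_ne (sin q.1) 0 with hs | hs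
  · have hc : cos q.1 ^ 2 = 1 := by nlinarith [sin_sq_add_cos_sq q.1]
    rw [hs, hc]
    norm_num [hk]
  · positivity

lemma abs_hodographMap_fst_sub_le (q : ℝ × ℝ) : |(hodographMap h k q).1 - q.1| ≤ 1 := by
  have hk : |k q.2 - 1| ≤ 1 := abs_le.2 ⟨by linarith [hp.pos q.2], by linarith [hp.lt_two q.2]⟩
  rw [hodographMap, add_sub_cancel_left, abs_mul, abs_mul]
  exact mul_le_one₀ hk (by positivity)
    (mul_le_one₀ (abs_sin_le_one _) (abs_nonneg _) (abs_cos_le_one _))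

lemma hodographMap_snd_mem_Icc (q : ℝ × ℝ) :
    (hodographMap h k q).2 ∈ Set.Icc (h q.2) (h q.2 + 3) := by
  have hk := hp.pos q.2
  have hk2 := hp.lt_two q.2
  have hs := sin_sq_le_one q.1
  have hc := cos_sq_le_one q.1
  constructor <;> simp only [hodographMap] <;> nlinarith [sq_nonneg (sin q.1), sq_nonneg (cos q.1)]

end IsHodographProfile

lemma trace_add_mul_eq_zero_of_frame {a b c s e m p q r : ℝ} (hsc : s ^ 2 + c ^ 2 = 1)
    (hdet : b ^ 2 + m * a ^ 2 ≠ 0)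
    (h₁ : p * (b * c + a * s) + q * (b * s - a * c) = -e * s)
    (h₂ : q * (b * c + a * s) + r * (b * s - a * c) = e * c)
    (h₃ : p * (m * a * c - b * s) + q * (m * a * s + b * c) = e * c)
    (h₄ : q * (m * a * c - b * s) + r * (m * a * s + b * c) = e * s) :
    p + r + (m - 1) * (c ^ 2 * p + 2 * c * s * q + s ^ 2 * r) = 0 := by
  -- The entries of the Hessian in the polar frame.
  set nn := c ^ 2 * p + 2 * c * s * q + s ^ 2 * r
  set nτ := -c * s * p + (c ^ 2 - s ^ 2) * q + c * s * r
  set ττ := s ^ 2 * p - 2 * c * s * q + c ^ 2 * r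
  have h₁n : b * nn - a * nτ = 0 := by linear_combination c * h₁ + s * h₂
  have h₁τ : b * nτ - a * ττ = e := by linear_combination -s * h₁ + c * h₂ + e * hsc
  have h₂n : m * a * nn + b * nτ = e := by linear_combination c * h₃ + s * h₄ + e * hsc
  have h₂τ : m * a * nτ + b * ττ = 0 := by linear_combination -s * h₃ + c * h₄
  have key : m * nn + ττ = 0 := (mul_eq_zero.1 (by
    linear_combination b * (m * h₁n + h₂τ) + m * a * (h₂n - h₁τ) :
      (b ^ 2 + m * a ^ 2) * (m * nn + ττ) = 0)).resolve_left hdet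
  linear_combination key - (p + r) * hsc

/-- A hodograph profile whose `hodographMap` is onto the plane, so that it defines an entire
solution. -/
structure IsEntireProfile (h k m : ℝ → ℝ) : Prop extends IsHodographProfile h k m where
  tendsto_atTop : Tendsto h atTop atTop
  tendsto_atBot : Tendsto h atBot atBot

namespace IsEntireProfile

variable {h k m : ℝ → ℝ} (hp : IsEntireProfile h k m)
include hp

lemma bijective_hodographMap : Function.Bijective (hodographMap h k) := by
  have hfst (q : ℝ × ℝ) := abs_le.1 (hp.abs_hodographMap_fst_sub_le q)
  have hsnd (q : ℝ × ℝ) := hp.hodographMap_snd_mem_Icc q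
  refine bijective_of_hasStrictFDerivAt_det_pos hp.hasStrictFDerivAt_hodographMap
    hp.hodographDeriv_one_zero_fst_pos hp.det_hodographDeriv_pos ?_ ?_ ?_ ?_
  · exact tendsto_atTop_mono (fun q => by linarith [(hfst q).1])
      (tendsto_atTop_add_const_right _ (-1) tendsto_fst)
  · exact tendsto_atBot_mono (fun q => by linarith [(hfst q).2])
      (tendsto_atBot_add_const_right _ 1 tendsto_fst)
  · exact tendsto_atTop_mono (fun q => (hsnd q).1) (hp.tendsto_atTop.comp tendsto_snd)
  · exact tendsto_atBot_mono (fun q => (hsnd q).2)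
      (tendsto_atBot_add_const_right _ 3 (hp.tendsto_atBot.comp tendsto_snd))

/-- `hodographDeriv` as an isomorphism, which its positive determinant provides. -/
noncomputable def derivEquiv (q : ℝ × ℝ) : (ℝ × ℝ) ≃L[ℝ] (ℝ × ℝ) :=
  (hodographDeriv k m q).toContinuousLinearEquivOfDetNeZero (hp.det_hodographDeriv_pos q).ne'

lemma hasStrictFDerivAt_derivEquiv (q : ℝ × ℝ) :
    HasStrictFDerivAt (hodographMap h k) (hp.derivEquiv q : ℝ × ℝ →L[ℝ] ℝ × ℝ) q :=
  hp.hasStrictFDerivAt_hodographMap q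

/-- `hodographMap h k` as a homeomorphism of the plane; its inverse expresses the polar coordinates
of the gradient as functions of position. -/
noncomputable def hodograph : ℝ × ℝ ≃ₜ ℝ × ℝ :=
  (Equiv.ofBijective _ hp.bijective_hodographMap).toHomeomorphOfContinuousOpen
    (continuous_iff_continuousAt.2 fun q => (hp.hasStrictFDerivAt_hodographMap q).continuousAt)
    (isOpenMap_of_hasStrictFDerivAt_equiv hp.hasStrictFDerivAt_derivEquiv)

lemma coe_hodograph : ⇑hp.hodograph = hodographMap h k := rfl

lemma contDiff_hodographMap : ContDiff ℝ 1 (hodographMap h k) := by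
  have hk_cont := hp.continuous_snd
  have hm_cont := hp.continuous_ratio
  refine contDiff_one_iff_hasFDerivAt.2 ⟨hodographDeriv k m, ?_, fun q =>
    (hp.hasStrictFDerivAt_hodographMap q).hasFDerivAt⟩
  unfold hodographDeriv radialUnit angularUnit
  fun_prop

lemma contDiff_hodograph_symm : ContDiff ℝ 1 hp.hodograph.symm :=
  hp.hodograph.contDiff_symm (fun q => (hp.hasStrictFDerivAt_derivEquiv q).hasFDerivAt)
    hp.contDiff_hodographMap

/-- The entire solution with profile `h, k, m`: where its gradient has polar coordinates `(θ, t)`,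
the inverse Legendre transformation `x u_x + y u_y - r (h (log r) sin θ + θ cos θ)` simplifies to
`exp t * k t * sin θ`. -/
noncomputable def solution (p : ℝ × ℝ) : ℝ :=
  exp (hp.hodograph.symm p).2 * k (hp.hodograph.symm p).2 * sin (hp.hodograph.symm p).1

lemma hasFDerivAt_solution (p : ℝ × ℝ) :
    HasFDerivAt hp.solution
      ((polarGradient (hp.hodograph.symm p)).1 • ContinuousLinearMap.fst ℝ ℝ ℝ +
        (polarGradient (hp.hodograph.symm p)).2 • ContinuousLinearMap.snd ℝ ℝ ℝ) p := by
  set q := hp.hodograph.symm p with hq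
  have hinv : HasFDerivAt hp.hodograph.symm
      ((hp.derivEquiv q).symm : ℝ × ℝ →L[ℝ] ℝ × ℝ) p := by
    have := ((hp.hasStrictFDerivAt_derivEquiv q).to_local_left_inverse
      (.of_forall hp.hodograph.symm_apply_apply)).hasFDerivAt
    rwa [← hp.coe_hodograph, hq, hp.hodograph.apply_symm_apply] at this
  have hfst : HasFDerivAt (Prod.fst : ℝ × ℝ → ℝ) (.fst ℝ ℝ ℝ) q := hasFDerivAt_fst
  have hsnd : HasFDerivAt (Prod.snd : ℝ × ℝ → ℝ) (.snd ℝ ℝ ℝ) q := hasFDerivAt_snd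
  have hU := (hsnd.exp.mul ((hp.hasDerivAt_snd q.2).comp_hasFDerivAt q hsnd)).mul hfst.sin
  refine (hU.comp p hinv).congr_fderiv ?_
  refine ((hp.derivEquiv q).eq_comp_toContinuousLinearMap_symm _ _).2 ?_ |>.symm
  change _ ∘L hodographDeriv k m q = _
  have := sin_sq_add_cos_sq q.1
  ext <;> simp [hodographDeriv, polarGradient, radialUnit, angularUnit] <;> grind

lemma ux_solution (q : ℝ × ℝ) : ux hp.solution (hodographMap h k q) = exp q.2 * cos q.1 := by
  rw [ux, (hp.hasFDerivAt_solution _).fderiv, ← hp.coe_hodograph, hp.hodograph.symm_apply_apply]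
  simp [polarGradient, radialUnit]

lemma uy_solution (q : ℝ × ℝ) : uy hp.solution (hodographMap h k q) = exp q.2 * sin q.1 := by
  rw [uy, (hp.hasFDerivAt_solution _).fderiv, ← hp.coe_hodograph, hp.hodograph.symm_apply_apply]
  simp [polarGradient, radialUnit]

lemma contDiff_solution : ContDiff ℝ 2 hp.solution := by
  have hinv := hp.contDiff_hodograph_symm
  refine (contDiff_succ_iff_hasFDerivAt (n := 1)).2 ⟨_, ?_, hp.hasFDerivAt_solution⟩
  unfold polarGradient radialUnit
  simp only [Nat.cast_one, Prod.smul_mk, smul_eq_mul]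
  fun_prop

lemma solution_not_affine :
    ¬ ∃ a b c : ℝ, ∀ x y : ℝ, hp.solution (x, y) = a * x + b * y + c := by
  rintro ⟨a, b, c, hu⟩
  have hux (q : ℝ × ℝ) : exp q.2 * cos q.1 = a := by
    rw [← hp.ux_solution, ← ux_affine a b c,
      (funext fun p => hu p.1 p.2 : hp.solution = fun p => a * p.1 + b * p.2 + c)]
  have h0 := hux (0, 0)
  have hπ := hux (π, 0)
  norm_num at h0 hπ
  linarith

lemma fderiv_ux_solution_comp (q : ℝ × ℝ) :
    fderiv ℝ (ux hp.solution) (hodographMap h k q) ∘L hodographDeriv k m q =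
      exp q.2 • (cos q.1 • .snd ℝ ℝ ℝ - sin q.1 • .fst ℝ ℝ ℝ) := by
  have hfst : HasFDerivAt (Prod.fst : ℝ × ℝ → ℝ) (.fst ℝ ℝ ℝ) q := hasFDerivAt_fst
  have hsnd : HasFDerivAt (Prod.snd : ℝ × ℝ → ℝ) (.snd ℝ ℝ ℝ) q := hasFDerivAt_snd
  have hcomp : HasFDerivAt (ux hp.solution ∘ hodographMap h k) _ q :=
    (differentiable_ux hp.contDiff_solution _).hasFDerivAt.comp q
      (hp.hasStrictFDerivAt_hodographMap q).hasFDerivAt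
  rw [funext hp.ux_solution (f := ux hp.solution ∘ hodographMap h k)] at hcomp
  rw [hcomp.unique (hsnd.exp.fun_mul hfst.cos)]
  ext <;> simp [mul_comm]

lemma fderiv_uy_solution_comp (q : ℝ × ℝ) :
    fderiv ℝ (uy hp.solution) (hodographMap h k q) ∘L hodographDeriv k m q =
      exp q.2 • (sin q.1 • .snd ℝ ℝ ℝ + cos q.1 • .fst ℝ ℝ ℝ) := by
  have hfst : HasFDerivAt (Prod.fst : ℝ × ℝ → ℝ) (.fst ℝ ℝ ℝ) q := hasFDerivAt_fst
  have hsnd : HasFDerivAt (Prod.snd : ℝ × ℝ → ℝ) (.snd ℝ ℝ ℝ) q := hasFDerivAt_snd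
  have hcomp : HasFDerivAt (uy hp.solution ∘ hodographMap h k) _ q :=
    (differentiable_uy hp.contDiff_solution _).hasFDerivAt.comp q
      (hp.hasStrictFDerivAt_hodographMap q).hasFDerivAt
  rw [funext hp.uy_solution (f := uy hp.solution ∘ hodographMap h k)] at hcomp
  rw [hcomp.unique (hsnd.exp.fun_mul hfst.sin)]
  ext <;> simp [mul_comm]

theorem trace_add_mul_radial_solution (q : ℝ × ℝ) :
    let u := hp.solution
    let p := hodographMap h k q
    uxx u p + uyy u p + (m q.2 - 1) * (cos q.1 ^ 2 * uxx u p + 2 * cos q.1 * sin q.1 * uxy u p +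
      sin q.1 ^ 2 * uyy u p) = 0 := by
  intro u p
  have hdet := (hp.det_hodographDeriv_pos q).ne'
  rw [det_hodographDeriv] at hdet
  have hexpand (L : ℝ × ℝ →L[ℝ] ℝ) (v : ℝ × ℝ) : (L ∘L hodographDeriv k m q) v =
      L (1, 0) * (hodographDeriv k m q v).1 + L (0, 1) * (hodographDeriv k m q v).2 := by
    rw [ContinuousLinearMap.comp_apply, apply_eq_smul_add_smul, smul_eq_mul, smul_eq_mul,
      mul_comm, mul_comm (L (0, 1))]
  have hux (v : ℝ × ℝ) : uxx u p * (hodographDeriv k m q v).1 +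
      uxy u p * (hodographDeriv k m q v).2 = exp q.2 * (cos q.1 * v.2 - sin q.1 * v.1) :=
    (hexpand _ v).symm.trans (DFunLike.congr_fun (hp.fderiv_ux_solution_comp q) v)
  have huy (v : ℝ × ℝ) : uxy u p * (hodographDeriv k m q v).1 +
      uyy u p * (hodographDeriv k m q v).2 = exp q.2 * (sin q.1 * v.2 + cos q.1 * v.1) := by
    rw [← fderiv_uy_one_zero hp.contDiff_solution]
    exact (hexpand _ v).symm.trans (DFunLike.congr_fun (hp.fderiv_uy_solution_comp q) v)
  refine trace_add_mul_eq_zero_of_frame (sin_sq_add_cos_sq q.1) hdet (e := exp q.2) ?_ ?_ ?_ ?_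
  · simpa [hodographDeriv_one_zero] using hux (1, 0)
  · simpa [hodographDeriv_one_zero] using huy (1, 0)
  · simpa [hodographDeriv_zero_one] using hux (0, 1)
  · simpa [hodographDeriv_zero_one] using huy (0, 1)

theorem eulerLagrange_solution {F' F'' : ℝ → ℝ}
    (hm : ∀ t, (m t - 1) * F' (exp (2 * t)) = 2 * exp (2 * t) * F'' (exp (2 * t))) (p : ℝ × ℝ) :
    let u := hp.solution
    F' (ux u p ^ 2 + uy u p ^ 2) * (uxx u p + uyy u p) + 2 * F'' (ux u p ^ 2 + uy u p ^ 2) *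
      (ux u p ^ 2 * uxx u p + 2 * ux u p * uy u p * uxy u p + uy u p ^ 2 * uyy u p) = 0 := by
  intro u
  obtain ⟨⟨θ, t⟩, hθt⟩ := hp.bijective_hodographMap.surjective p
  have hux : ux u p = exp t * cos θ := hθt ▸ hp.ux_solution (θ, t)
  have huy : uy u p = exp t * sin θ := hθt ▸ hp.uy_solution (θ, t)
  have hHess := hp.trace_add_mul_radial_solution (θ, t)
  simp only [hθt] at hHess
  have hexp : exp (2 * t) = exp t ^ 2 := by rw [two_mul, exp_add, sq]
  have hgrad : (exp t * cos θ) ^ 2 + (exp t * sin θ) ^ 2 = exp (2 * t) := by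
    linear_combination exp t ^ 2 * sin_sq_add_cos_sq θ - hexp
  rw [hux, huy, hgrad]
  set radial := cos θ ^ 2 * uxx u p + 2 * cos θ * sin θ * uxy u p + sin θ ^ 2 * uyy u p
  calc F' (exp (2 * t)) * (uxx u p + uyy u p) + 2 * F'' (exp (2 * t)) *
        ((exp t * cos θ) ^ 2 * uxx u p + 2 * (exp t * cos θ) * (exp t * sin θ) * uxy u p +
          (exp t * sin θ) ^ 2 * uyy u p)
    _ = F' (exp (2 * t)) * (uxx u p + uyy u p) +
        2 * exp (2 * t) * F'' (exp (2 * t)) * radial := by rw [hexp]; ring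
    _ = F' (exp (2 * t)) * (uxx u p + uyy u p + (m t - 1) * radial) := by rw [← hm]; ring
    _ = 0 := by rw [hHess, mul_zero]

end IsEntireProfile

/-- A regular variational integrand `F` of class `C²` on `[0, ∞)` (applied to `|Du|²`), with its
first two one-sided derivatives `F'` and `F''`. -/
structure IsRegularIntegrand (F F' F'' : ℝ → ℝ) : Prop where
  hasDerivWithinAt : ∀ w, 0 ≤ w → HasDerivWithinAt F (F' w) (Set.Ici 0) w
  hasDerivWithinAt_deriv : ∀ w, 0 ≤ w → HasDerivWithinAt F' (F'' w) (Set.Ici 0) w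
  deriv_pos : ∀ w, 0 ≤ w → 0 < F' w
  elliptic : ∀ w, 0 ≤ w → 0 < F' w + 2 * w * F'' w
  continuousOn : ContinuousOn F'' (Set.Ici 0)

/-- The ratio `(F' + 2 w F'') / F'`, in the form `1 + w λ`, of the coefficients of the second
derivatives along and across the gradient in the Euler–Lagrange equation, where `w = |Du|²`. -/
noncomputable def ellipticityRatio (F' F'' : ℝ → ℝ) (w : ℝ) : ℝ := 1 + w * (2 * F'' w / F' w)

lemma hasDerivAt_exp_two_mul (t : ℝ) :
    HasDerivAt (fun t => exp (2 * t)) (exp (2 * t) * 2) t :=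
  (hasDerivAt_const_mul 2).exp

/-- The solution `k` of `k' = m (2 - k) - k` with `k → 1` at `-∞`, where `m` is the ellipticity
ratio at `w = exp (2 t)`. The equation says that `g = 2 - k` satisfies `(w F' g)' = 2 w F'`, whose
right-hand side is the `t`-derivative of `F (exp (2 t))`. -/
noncomputable def hodographProfile (F F' : ℝ → ℝ) (t : ℝ) : ℝ :=
  2 - (F (exp (2 * t)) - F 0) / (exp (2 * t) * F' (exp (2 * t)))

namespace IsRegularIntegrand

variable {F F' F'' : ℝ → ℝ}

lemma of_contDiffOn (hF : ContDiffOn ℝ 2 F (Set.Ici 0)) (hF' : F' = derivWithin F (Set.Ici 0))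
    (hF'' : F'' = derivWithin F' (Set.Ici 0)) (hpos : ∀ w, 0 ≤ w → 0 < F' w)
    (hreg : ∀ w, 0 ≤ w → 0 < F' w + 2 * w * F'' w) : IsRegularIntegrand F F' F'' := by
  have hF'_contDiff : ContDiffOn ℝ 1 F' (Set.Ici 0) :=
    hF' ▸ hF.derivWithin (uniqueDiffOn_Ici 0) le_rfl
  refine ⟨fun w hw => ?_, fun w hw => ?_, hpos, hreg, ?_⟩
  · exact hF' ▸ (hF.differentiableOn two_ne_zero w hw).hasDerivWithinAt
  · exact hF'' ▸ (hF'_contDiff.differentiableOn one_ne_zero w hw).hasDerivWithinAt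
  · exact hF'' ▸ hF'_contDiff.continuousOn_derivWithin (uniqueDiffOn_Ici 0) le_rfl

variable (hr : IsRegularIntegrand F F' F'') {w : ℝ}
include hr

lemma hasDerivAt (hw : 0 < w) : HasDerivAt F (F' w) w :=
  (hr.hasDerivWithinAt w hw.le).hasDerivAt (Ici_mem_nhds hw)

lemma hasDerivAt_deriv (hw : 0 < w) : HasDerivAt F' (F'' w) w :=
  (hr.hasDerivWithinAt_deriv w hw.le).hasDerivAt (Ici_mem_nhds hw)

lemma continuousOn_deriv : ContinuousOn F' (Set.Ici 0) := fun w hw =>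
  (hr.hasDerivWithinAt_deriv w hw).continuousWithinAt

lemma apply_zero_lt (hw : 0 < w) : F 0 < F w := by
  refine strictMonoOn_of_hasDerivWithinAt_pos (convex_Ici 0) (f' := F')
    (fun x hx => (hr.hasDerivWithinAt x hx).continuousWithinAt) (fun x hx => ?_) (fun x hx => ?_)
    Set.self_mem_Ici hw.le hw
  · rw [interior_Ici] at hx
    exact (hr.hasDerivAt hx).hasDerivWithinAt
  · exact hr.deriv_pos x (interior_subset hx)

lemma sub_apply_zero_lt (hw : 0 < w) : F w - F 0 < 2 * w * F' w := by
  have hmono : StrictMonoOn (fun w => 2 * w * F' w - F w) (Set.Ici 0) := by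
    refine strictMonoOn_of_hasDerivWithinAt_pos (convex_Ici 0)
      (f' := fun x => F' x + 2 * x * F'' x)
      (((continuousOn_const.mul continuousOn_id).mul hr.continuousOn_deriv).sub
        fun x hx => (hr.hasDerivWithinAt x hx).continuousWithinAt) (fun x hx => ?_)
      (fun x hx => hr.elliptic x (interior_subset hx))
    rw [interior_Ici] at hx
    refine ((((hasDerivAt_const_mul 2).mul (hr.hasDerivAt_deriv hx)).sub
      (hr.hasDerivAt hx)).congr_deriv ?_).hasDerivWithinAt
    ring
  have := hmono Set.self_mem_Ici hw.le hw
  simp only [mul_zero, zero_mul, zero_sub] at this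
  linarith

lemma ellipticityRatio_sub_one_mul (hw : 0 ≤ w) :
    (ellipticityRatio F' F'' w - 1) * F' w = 2 * w * F'' w := by
  have hF' := (hr.deriv_pos w hw).ne'
  rw [ellipticityRatio]
  field_simp
  ring

lemma ellipticityRatio_pos (hw : 0 ≤ w) : 0 < ellipticityRatio F' F'' w := by
  have hF' := hr.deriv_pos w hw
  refine pos_of_mul_pos_left ?_ hF'.le
  linarith [hr.ellipticityRatio_sub_one_mul hw, hr.elliptic w hw]

lemma continuousOn_ellipticityRatio : ContinuousOn (ellipticityRatio F' F'') (Set.Ici 0) :=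
  continuousOn_const.add (continuousOn_id.mul ((continuousOn_const.mul hr.continuousOn).div
    hr.continuousOn_deriv fun w hw => (hr.deriv_pos w hw).ne'))

lemma hasDerivAt_hodographProfile (t : ℝ) :
    HasDerivAt (hodographProfile F F')
      (ellipticityRatio F' F'' (exp (2 * t)) * (2 - hodographProfile F F' t) -
        hodographProfile F F' t) t := by
  have hw := exp_pos (2 * t)
  have hw' := hasDerivAt_exp_two_mul t
  have hF' := hr.deriv_pos _ hw.le
  refine (((((hr.hasDerivAt hw).comp t hw').sub_const (F 0)).div
    (hw'.mul ((hr.hasDerivAt_deriv hw).comp t hw')) (mul_pos hw hF').ne').const_sub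
      2).congr_deriv ?_
  simp only [ellipticityRatio, hodographProfile, Function.comp_def, Pi.mul_apply]
  field_simp
  ring

theorem isHodographProfile :
    IsHodographProfile (fun t => ∫ x in (0 : ℝ)..t, hodographProfile F F' x) (hodographProfile F F')
      (fun t => ellipticityRatio F' F'' (exp (2 * t))) where
  hasDerivAt_fst t :=
    ((continuous_iff_continuousAt.2 fun t =>
      (hr.hasDerivAt_hodographProfile t).continuousAt).integral_hasStrictDerivAt 0 t).hasDerivAt
  hasDerivAt_snd := hr.hasDerivAt_hodographProfile
  continuous_ratio := hr.continuousOn_ellipticityRatio.comp_continuous (by fun_prop)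
    fun t => (exp_pos _).le
  ratio_pos t := hr.ellipticityRatio_pos (exp_pos _).le
  pos t := by
    have hw := exp_pos (2 * t)
    rw [hodographProfile, sub_pos, div_lt_iff₀ (mul_pos hw (hr.deriv_pos _ hw.le)), ← mul_assoc]
    exact hr.sub_apply_zero_lt hw
  lt_two t := by
    have hw := exp_pos (2 * t)
    exact sub_lt_self _ (div_pos (sub_pos.2 (hr.apply_zero_lt hw))
      (mul_pos hw (hr.deriv_pos _ hw.le)))

lemma integral_ellipticityRatio_comp_exp (t : ℝ) :
    ∫ x in (0 : ℝ)..t, ellipticityRatio F' F'' (exp (2 * x)) /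
        (1 + ellipticityRatio F' F'' (exp (2 * x))) =
      (1 / 2) * ∫ w in (1 : ℝ)..exp (2 * t),
        ellipticityRatio F' F'' w / (1 + ellipticityRatio F' F'' w) * (1 / w) := by
  have hcont : ContinuousOn
      (fun w => ellipticityRatio F' F'' w / (1 + ellipticityRatio F' F'' w) * (1 / w))
      (Set.Ioi 0) := by
    have hm := hr.continuousOn_ellipticityRatio.mono Set.Ioi_subset_Ici_self
    refine (hm.div (continuousOn_const.add hm) fun w hw => ?_).mul
      (continuousOn_const.div continuousOn_id fun w hw => ne_of_gt hw)
    exact (add_pos one_pos (hr.ellipticityRatio_pos (le_of_lt hw))).ne'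
  have hsubst := intervalIntegral.integral_comp_mul_deriv' (a := 0) (b := t)
    (fun x _ => hasDerivAt_exp_two_mul x) (by fun_prop)
    (hcont.mono (Set.image_subset_iff.2 fun x _ => exp_pos (2 * x)))
  rw [mul_zero, exp_zero] at hsubst
  rw [← hsubst, ← intervalIntegral.integral_const_mul]
  refine intervalIntegral.integral_congr fun x _ => ?_
  have := exp_pos (2 * x)
  simp only [Function.comp_apply]
  field_simp

lemma tendsto_ellipticityRatio_comp_exp_atBot :
    Tendsto (fun t => ellipticityRatio F' F'' (exp (2 * t))) atBot (𝓝 1) := by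
  have hzero := hr.continuousOn_ellipticityRatio 0 Set.self_mem_Ici
  rw [ContinuousWithinAt, ellipticityRatio, zero_mul, add_zero] at hzero
  exact hzero.comp (tendsto_nhdsWithin_iff.2
    ⟨tendsto_exp_atBot.comp (tendsto_id.const_mul_atBot two_pos),
      .of_forall fun t => (exp_pos _).le⟩)

theorem isEntireProfile
    (hdiv : Tendsto (fun T => ∫ w in (1 : ℝ)..T,
      ellipticityRatio F' F'' w / (1 + ellipticityRatio F' F'' w) * (1 / w)) atTop atTop) :
    IsEntireProfile (fun t => ∫ x in (0 : ℝ)..t, hodographProfile F F' x) (hodographProfile F F')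
      (fun t => ellipticityRatio F' F'' (exp (2 * t))) where
  toIsHodographProfile := hr.isHodographProfile
  tendsto_atTop := by
    refine hr.isHodographProfile.tendsto_atTop ?_
    simp only [hr.integral_ellipticityRatio_comp_exp]
    exact (hdiv.comp (tendsto_exp_atTop.comp
      (tendsto_id.const_mul_atTop two_pos))).const_mul_atTop one_half_pos
  tendsto_atBot := by
    have hp := hr.isHodographProfile
    have hlim := hr.tendsto_ellipticityRatio_comp_exp_atBot
    have hne (t : ℝ) : 1 + ellipticityRatio F' F'' (exp (2 * t)) ≠ 0 := by
      linarith [hp.ratio_pos t]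
    exact hp.tendsto_atBot (tendsto_integral_atBot_of_tendsto_pos
      (hp.continuous_ratio.div (continuous_const.add hp.continuous_ratio) hne)
      (by norm_num) (hlim.div (hlim.const_add 1) (by norm_num)) 0)

end IsRegularIntegrand

/-- **Nitsche criterion** (J. C. C. Nitsche and J. A. Nitsche): if `F` is `C²` on `[0,∞)`
with `F' > 0` and `F' + 2wF'' > 0` (regular variational integrand), and the integral
`∫₁^∞ (1 + wλ(w))/(2 + wλ(w)) · dw/w` with `λ(w) = 2F''(w)/F'(w)` diverges, then the
Euler–Lagrange equation of `∫_{ℝ²} F(|Du|²) dx` admits an entire non-linear `C²` solution. -/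
theorem nitsche_criterion (F : ℝ → ℝ) (hF : ContDiffOn ℝ 2 F (Set.Ici 0))
    (F' : ℝ → ℝ) (hF' : F' = derivWithin F (Set.Ici 0))
    (F'' : ℝ → ℝ) (hF'' : F'' = derivWithin F' (Set.Ici 0))
    (hpos : ∀ w : ℝ, 0 ≤ w → 0 < F' w)
    (hreg : ∀ w : ℝ, 0 ≤ w → 0 < F' w + 2 * w * F'' w)
    (lam : ℝ → ℝ) (hlam : lam = fun w => 2 * F'' w / F' w)
    (hdiv : Tendsto
      (fun T : ℝ => ∫ w in (1:ℝ)..T, (1 + w * lam w) / (2 + w * lam w) * (1 / w))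
      atTop atTop) :
    ∃ u : ℝ × ℝ → ℝ, ContDiff ℝ 2 u ∧
      (¬ ∃ a b c : ℝ, ∀ x y : ℝ, u (x, y) = a * x + b * y + c) ∧
      ∀ p : ℝ × ℝ,
        F' (ux u p ^ 2 + uy u p ^ 2) * (uxx u p + uyy u p)
          + 2 * F'' (ux u p ^ 2 + uy u p ^ 2) *
            (ux u p ^ 2 * uxx u p + 2 * ux u p * uy u p * uxy u p
              + uy u p ^ 2 * uyy u p) = 0 := by
  have hr := IsRegularIntegrand.of_contDiffOn hF hF' hF'' hpos hreg
  have hp := hr.isEntireProfile <| hdiv.congr fun T => by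
    simp only [hlam, ellipticityRatio, ← add_assoc, one_add_one_eq_two]
  exact ⟨hp.solution, hp.contDiff_solution, hp.solution_not_affine,
    hp.eulerLagrange_solution fun t => hr.ellipticityRatio_sub_one_mul (exp_pos (2 * t)).le⟩
end

section
/- The function u : ℝ² → ℝ, u(x,y) := e^{x+y}, is of class C², is not affine linear, and satisfies the equation u_y²·u_xx − 2·u_x·u_y·u_xy + u_x²·u_yy = 0 at every point of ℝ². Hence the equation L_{−1,0}[u] = 0 (corresponding to the 1-Laplace equation div(Du/|Du|) = 0) does not have the Bernstein property. -/
/-! A ridge function `f ∘ ℓ`, with `ℓ` a linear form on the plane, has a Hessian proportional to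
`ℓ ⊗ ℓ`. The left-hand side of the `1`-Laplace equation is this Hessian evaluated twice at the
direction `(-u_y, u_x)`, which is tangent to the level line and hence lies in `ker ℓ`: the level
sets of a ridge function are straight, whatever the profile `f`, so every non-affine `f` of class
`C²` and `ℓ ≠ 0` give a counterexample. -/

theorem fst_add_snd_ne_zero {R : Type*} [Semiring R] [TopologicalSpace R] [ContinuousAdd R]
    [Nontrivial R] : ContinuousLinearMap.fst R R R + ContinuousLinearMap.snd R R R ≠ 0 :=
  fun h => by simpa using DFunLike.congr_fun h (1, 0)

section Affine

variable {𝕜 E F : Type*} [Field 𝕜] [AddCommGroup E] [Module 𝕜 E] [AddCommGroup F] [Module 𝕜 F]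

theorem exists_affineMap_eq_of_comp_linearMap_eq {f : 𝕜 → F} {ℓ : E →ₗ[𝕜] 𝕜} (hℓ : ℓ ≠ 0)
    {g : E →ᵃ[𝕜] F} (hg : ⇑g = f ∘ ℓ) : ∃ h : 𝕜 →ᵃ[𝕜] F, ⇑h = f := by
  obtain ⟨w, hw⟩ := LinearMap.surjective hℓ 1
  refine ⟨g.comp (LinearMap.toSpanSingleton 𝕜 E w).toAffineMap, funext fun t => ?_⟩
  calc
    g (t • w) = f (ℓ (t • w)) := congrFun hg _
    _ = f t := by rw [map_smul, hw, smul_eq_mul, mul_one]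

theorem affineMap_ne_of_strictConvexOn [LinearOrder 𝕜] [IsStrictOrderedRing 𝕜] [PartialOrder F]
    [Nontrivial E] {f : E → F} (hf : StrictConvexOn 𝕜 Set.univ f) (g : E →ᵃ[𝕜] F) : ⇑g ≠ f := by
  rintro rfl
  obtain ⟨x, y, hxy⟩ := exists_pair_ne E
  have hlt := hf.2 (Set.mem_univ x) (Set.mem_univ y) hxy one_half_pos one_half_pos (add_halves 1)
  exact hlt.ne (Convex.combo_affine_apply (add_halves 1))

end Affine

section RidgeDerivatives

variable {𝕜 E F : Type*} [NontriviallyNormedField 𝕜] [NormedAddCommGroup E] [NormedSpace 𝕜 E]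
  [NormedAddCommGroup F] [NormedSpace 𝕜 F] {f : 𝕜 → F}

theorem fderiv_comp_strongDual_apply (ℓ : StrongDual 𝕜 E) {p : E}
    (hf : DifferentiableAt 𝕜 f (ℓ p)) (v : E) :
    fderiv 𝕜 (f ∘ ℓ) p v = ℓ v • deriv f (ℓ p) := by
  rw [fderiv_comp p hf ℓ.differentiableAt, ℓ.fderiv, ContinuousLinearMap.comp_apply,
    fderiv_eq_smul_deriv]

theorem fderiv_fderiv_comp_strongDual_apply (ℓ : StrongDual 𝕜 E) (hf : Differentiable 𝕜 f) {p : E}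
    (hf' : DifferentiableAt 𝕜 (deriv f) (ℓ p)) (v w : E) :
    fderiv 𝕜 (fun q => fderiv 𝕜 (f ∘ ℓ) q v) p w = ℓ v • ℓ w • deriv (deriv f) (ℓ p) := by
  have hfirst : (fun q => fderiv 𝕜 (f ∘ ℓ) q v) = ℓ v • (deriv f ∘ ℓ) :=
    funext fun q => fderiv_comp_strongDual_apply ℓ (hf (ℓ q)) v
  have hdiff : DifferentiableAt 𝕜 (deriv f ∘ ℓ) p := hf'.comp p ℓ.differentiableAt
  rw [hfirst, fderiv_const_smul hdiff, smul_apply, fderiv_comp_strongDual_apply ℓ hf' w]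

end RidgeDerivatives

section OneLaplace

/-- The `1`-Laplace operator in non-divergence form: `|Du|³ div(Du/|Du|)` written as a
polynomial in the derivatives of `u`, which makes sense at critical points as well. -/
noncomputable def oneLaplace (u : ℝ × ℝ → ℝ) (p : ℝ × ℝ) : ℝ :=
  uy u p ^ 2 * uxx u p - 2 * ux u p * uy u p * uxy u p + ux u p ^ 2 * uyy u p

variable {f : ℝ → ℝ} {ℓ : StrongDual ℝ (ℝ × ℝ)}

theorem oneLaplace_comp_strongDual_eq_zero (hf : Differentiable ℝ f) {p : ℝ × ℝ}
    (hf' : DifferentiableAt ℝ (deriv f) (ℓ p)) : oneLaplace (f ∘ ℓ) p = 0 := by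
  have hx : ux (f ∘ ℓ) p = ℓ (1, 0) * deriv f (ℓ p) := fderiv_comp_strongDual_apply ℓ (hf _) _
  have hy : uy (f ∘ ℓ) p = ℓ (0, 1) * deriv f (ℓ p) := fderiv_comp_strongDual_apply ℓ (hf _) _
  have hxx : uxx (f ∘ ℓ) p = ℓ (1, 0) * (ℓ (1, 0) * deriv (deriv f) (ℓ p)) :=
    fderiv_fderiv_comp_strongDual_apply ℓ hf hf' _ _
  have hxy : uxy (f ∘ ℓ) p = ℓ (1, 0) * (ℓ (0, 1) * deriv (deriv f) (ℓ p)) :=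
    fderiv_fderiv_comp_strongDual_apply ℓ hf hf' _ _
  have hyy : uyy (f ∘ ℓ) p = ℓ (0, 1) * (ℓ (0, 1) * deriv (deriv f) (ℓ p)) :=
    fderiv_fderiv_comp_strongDual_apply ℓ hf hf' _ _
  rw [oneLaplace, hx, hy, hxx, hxy, hyy]
  ring

theorem not_exists_comp_strongDual_eq_affine (hf : ∀ g : ℝ →ᵃ[ℝ] ℝ, ⇑g ≠ f) (hℓ : ℓ ≠ 0) :
    ¬ ∃ a b c : ℝ, ∀ x y : ℝ, (f ∘ ℓ) (x, y) = a * x + b * y + c := by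
  rintro ⟨a, b, c, h⟩
  let g : ℝ × ℝ →ᵃ[ℝ] ℝ :=
    (a • LinearMap.fst ℝ ℝ ℝ + b • LinearMap.snd ℝ ℝ ℝ).toAffineMap + AffineMap.const ℝ _ c
  have hg : ⇑g = f ∘ ℓ := funext fun p => (h p.1 p.2).symm
  obtain ⟨g', hg'⟩ := exists_affineMap_eq_of_comp_linearMap_eq
    (ContinuousLinearMap.coe_injective.ne hℓ) hg
  exact hf g' hg'

theorem one_laplace_not_bernstein_general (hf : ContDiff ℝ 2 f)
    (hf_ne : ∀ g : ℝ →ᵃ[ℝ] ℝ, ⇑g ≠ f) (hℓ : ℓ ≠ 0) :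
    ContDiff ℝ 2 (f ∘ ℓ) ∧
    (¬ ∃ a b c : ℝ, ∀ x y : ℝ, (f ∘ ℓ) (x, y) = a * x + b * y + c) ∧
    ∀ p : ℝ × ℝ, oneLaplace (f ∘ ℓ) p = 0 :=
  ⟨hf.comp ℓ.contDiff, not_exists_comp_strongDual_eq_affine hf_ne hℓ, fun _ =>
    oneLaplace_comp_strongDual_eq_zero (hf.differentiable two_ne_zero)
      (hf.differentiable_deriv_two _)⟩

end OneLaplace

/-- The function `u(x,y) = e^{x+y}` is a `C²` entire non-linear solution of
`u_y²·u_xx − 2u_xu_yu_xy + u_x²·u_yy = 0`, i.e. of `L_{−1,0}[u] = 0` (the `1`-Laplace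
equation `div(Du/|Du|) = 0`); hence this equation does not have the Bernstein property. -/
theorem one_laplace_not_bernstein
    (u : ℝ × ℝ → ℝ) (hu : u = fun p => Real.exp (p.1 + p.2)) :
    ContDiff ℝ 2 u ∧
    (¬ ∃ a b c : ℝ, ∀ x y : ℝ, u (x, y) = a * x + b * y + c) ∧
    ∀ p : ℝ × ℝ,
      uy u p ^ 2 * uxx u p - 2 * ux u p * uy u p * uxy u p
        + ux u p ^ 2 * uyy u p = 0 := by
  exact hu ▸ one_laplace_not_bernstein_general Real.contDiff_exp
    (affineMap_ne_of_strictConvexOn strictConvexOn_exp) fst_add_snd_ne_zero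
end
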